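/- arXiv:2406.16405 — 3 statements merged into one kernel-verified Lean document; each statement's English description precedes it below -/
import Mathlib

section
/- The set Gen_0(n,k) of generator words for C_n(0,k) equals {0^i 1^k 0^{n-i-k} : 0 ≤ i ≤ n-k}, and in particular has cardinality n-k+1. -/
/-- Result of transposing positions `i` (a `1`) and `j` (a `0`). -/
def applyT (w : List Bool) (i j : ℕ) : List Bool := (w.set i false).set j true

/-- `(i, j)` is a homogeneous transposition for `w`. -/
def okT (w : List Bool) (i j : ℕ) : Prop :=
  i < w.length ∧ j < w.length ∧ w.getD i false = true ∧ w.getD j false = false ∧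
    ∀ t, min i j < t → t < max i j → w.getD t false = false

/-- `L` is the list produced by the greedy Gray code algorithm for the set of
words satisfying `P`, started at `α`: each step performs the homogeneous
transposition with leftmost possible `1` and then leftmost possible `0`
producing a word satisfying `P` not yet listed, and the process runs until
no further step is possible. -/
def IsGreedyList (P : List Bool → Prop) (α : List Bool) (L : List (List Bool)) : Prop :=
  L.head? = some α ∧ L.Nodup ∧ (∀ w ∈ L, P w) ∧
  (∀ m, m + 1 < L.length →
    ∃ i j, okT (L.getD m []) i j ∧ L.getD (m + 1) [] = applyT (L.getD m []) i j ∧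
      ∀ i' j', okT (L.getD m []) i' j' → P (applyT (L.getD m []) i' j') →
        applyT (L.getD m []) i' j' ∉ L.take (m + 1) →
        i < i' ∨ (i = i' ∧ j ≤ j')) ∧
  (∀ i j, okT (L.getD (L.length - 1) []) i j →
    P (applyT (L.getD (L.length - 1) []) i j) →
    applyT (L.getD (L.length - 1) []) i j ∈ L)

/-- `α` is a generator: the greedy list started at `α` exhausts the words satisfying `P`. -/
def IsGen (P : List Bool → Prop) (α : List Bool) : Prop :=
  P α ∧ ∃ L, IsGreedyList P α L ∧ ∀ w, P w → w ∈ L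

/-- Membership in `C_n(p,k)`. -/
def memC (n p k : ℕ) (w : List Bool) : Prop :=
  w.length = n ∧ w.count true = k ∧ ∀ u v : List Bool, w = u ++ v → p * u.count true ≤ u.count false

/-- `β_{n,k}^i = 0^i 1^k 0^{n-i-k}` -/
def betaC (n k i : ℕ) : List Bool :=
  List.replicate i false ++ List.replicate k true ++ List.replicate (n - i - k) false

/-! A transposition inside `w` precedes, in the greedy order, every transposition of `w ++ s` that
involves a letter of `s`. Hence on `w ++ [b]` the algorithm runs as it does on `w` until it is stuck
there, and only then changes the last letter. With Pascal's decomposition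
`C_{n+1}(0,k+1) = C_n(0,k+1)0 ∪ C_n(0,k)1` this determines its runs by induction on `n`.

A run from `β_{n+1,k+1}^i` with `i < n - k` exhausts `C_n(0,k+1)0`, ending at some `β_{n,k+1}^e 0`,
jumps to `β_{n,k}^e 1`, and exhausts `C_n(0,k)1`, ending at the right-justified word
`0^{n-k}1^{k+1}`. A run from the right-justified word traverses the two halves in the opposite
order, and the parity of the number of ones decides where it ends.

A run from a word that is not of the form `β^i` also reaches the right-justified word, but
prematurely: there the last two letters are ones, so the final one is blocked by its neighbour and
the algorithm is stuck as soon as the prefix is. -/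

theorem length_applyT (w : List Bool) (i j : ℕ) : (applyT w i j).length = w.length := by
  simp [applyT]

theorem getD_applyT {w : List Bool} {i j : ℕ} (hj : j < w.length) (t : ℕ) :
    (applyT w i j).getD t false =
      if t = j then true else if t = i then false else w.getD t false := by
  simp only [applyT, List.getD_eq_getElem?_getD, List.getElem?_set]
  grind

theorem applyT_append {w : List Bool} {i j : ℕ} (hi : i < w.length) (hj : j < w.length)
    (s : List Bool) : applyT (w ++ s) i j = applyT w i j ++ s := by
  rw [applyT, applyT, List.set_append_left _ _ hi, List.set_append_left _ _ (by simpa using hj)]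

theorem okT.count_applyT {w : List Bool} {i j : ℕ} (h : okT w i j) :
    (applyT w i j).count true = w.count true := by
  obtain ⟨hi, hj, hone, hzero, -⟩ := h
  rw [List.getD_eq_getElem _ _ hi] at hone
  rw [List.getD_eq_getElem _ _ hj] at hzero
  have hij : i ≠ j := by
    rintro rfl
    simp [hone] at hzero
  have hpos : 0 < w.count true := List.count_pos_iff.2 (hone ▸ List.getElem_mem hi)
  rw [applyT, List.count_set (by simpa using hj), List.count_set hi]
  simp only [List.getElem_set_ne hij, hone, hzero]
  grind

theorem okT_append_iff {w : List Bool} {i j : ℕ} (hi : i < w.length) (hj : j < w.length)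
    (s : List Bool) : okT (w ++ s) i j ↔ okT w i j := by
  have hget {t : ℕ} (ht : t < w.length) : (w ++ s).getD t false = w.getD t false :=
    List.getD_append _ _ _ _ ht
  have hbetween {t : ℕ} (ht : t < max i j) : (w ++ s).getD t false = w.getD t false :=
    hget (by omega)
  simp only [okT, List.length_append, hget hi, hget hj]
  grind

theorem okT.le_of_append {w s : List Bool} {i j i' j' : ℕ} (h : okT w i j)
    (h' : okT (w ++ s) i' j') (hout : w.length ≤ i' ∨ w.length ≤ j') :
    i < i' ∨ (i = i' ∧ j ≤ j') := by
  obtain ⟨hi, hj, hone, -⟩ := h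
  obtain ⟨-, -, -, -, hzeros⟩ := h'
  have : ¬ (i' < i ∧ i < j') := fun hlt ↦ by
    have := hzeros i (by omega) (by omega)
    rw [List.getD_append _ _ _ _ hi, hone] at this
    contradiction
  omega

/-- `GreedyNext U w w'`: the greedy algorithm, standing at `w` with the words of `U` already
listed, appends `w'`. -/
def GreedyNext (U : Set (List Bool)) (w w' : List Bool) : Prop :=
  ∃ i j, okT w i j ∧ w' = applyT w i j ∧ w' ∉ U ∧
    ∀ i' j', okT w i' j' → applyT w i' j' ∉ U → i < i' ∨ (i = i' ∧ j ≤ j')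

/-- The greedy algorithm cannot leave `w` once the words of `U` are listed. -/
def IsStuck (U : Set (List Bool)) (w : List Bool) : Prop :=
  ∀ i j, okT w i j → applyT w i j ∈ U

/-- One step of the greedy algorithm. Its states are pairs `(U, w)` of the set of words listed so
far and the current word. -/
def GreedyStep (s t : Set (List Bool) × List Bool) : Prop :=
  GreedyNext s.1 s.2 t.2 ∧ t.1 = insert t.2 s.1

/-- `GreedyPath x U y`: after some number of steps, the greedy algorithm started at `x` has listed
exactly the words of `U` and stands at `y`. -/
def GreedyPath (x : List Bool) (U : Set (List Bool)) (y : List Bool) : Prop :=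
  Relation.ReflTransGen GreedyStep ({x}, x) (U, y)

theorem GreedyStep.rightUnique : Relator.RightUnique GreedyStep := by
  rintro ⟨U, w⟩ ⟨V, x⟩ ⟨V', x'⟩ ⟨⟨i, j, hok, hx, hnew, hmin⟩, hV⟩
    ⟨⟨i', j', hok', hx', hnew', hmin'⟩, hV'⟩
  simp only at *
  have hle := hmin i' j' hok' (hx' ▸ hnew')
  have hge := hmin' i j hok (hx ▸ hnew)
  obtain rfl : i = i' := by omega
  obtain rfl : j = j' := by omega
  rw [hV, hV', hx, hx']

theorem subset_of_greedySteps {s t : Set (List Bool) × List Bool}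
    (h : Relation.ReflTransGen GreedyStep s t) : s.1 ⊆ t.1 := by
  induction h with
  | refl => exact subset_rfl
  | tail _ h ih => exact h.2 ▸ ih.trans (Set.subset_insert _ _)

theorem IsStuck.not_greedyNext {U : Set (List Bool)} {w w' : List Bool} (h : IsStuck U w) :
    ¬ GreedyNext U w w' := by
  rintro ⟨i, j, hok, rfl, hnew, -⟩
  exact hnew (h i j hok)

theorem GreedyPath.subset_of_isStuck {x y z : List Bool} {U V : Set (List Bool)}
    (hU : GreedyPath x U y) (hV : GreedyPath x V z) (hstuck : IsStuck V z) : U ⊆ V := by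
  rcases Relation.ReflTransGen.total_of_right_unique GreedyStep.rightUnique hU hV with h | h
  · exact subset_of_greedySteps h
  · rcases Relation.ReflTransGen.cases_head h with heq | ⟨t, ht, -⟩
    · exact (congrArg Prod.fst heq).ge
    · exact absurd ht.1 hstuck.not_greedyNext

theorem GreedyPath.start_mem {x y : List Bool} {U : Set (List Bool)} (h : GreedyPath x U y) :
    x ∈ U :=
  subset_of_greedySteps h rfl

/-- `L` records consecutive steps of the greedy algorithm started at `α`. -/
def IsGreedyTrace (α : List Bool) (L : List (List Bool)) : Prop :=
  L.head? = some α ∧ ∀ m, m + 1 < L.length →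
    GreedyNext {w | w ∈ L.take (m + 1)} (L.getD m []) (L.getD (m + 1) [])

theorem IsGreedyTrace.length_pos {α : List Bool} {L : List (List Bool)} (h : IsGreedyTrace α L) :
    0 < L.length := by
  obtain ⟨t, rfl⟩ := List.head?_eq_some_iff.1 h.1
  exact Nat.succ_pos _

theorem IsGreedyTrace.nodup {α : List Bool} {L : List (List Bool)} (h : IsGreedyTrace α L) :
    L.Nodup := by
  rw [List.Nodup, List.pairwise_iff_getElem]
  intro i j hi hj hij heq
  obtain ⟨m, rfl⟩ : ∃ m, j = m + 1 := ⟨j - 1, by omega⟩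
  obtain ⟨-, -, -, -, hnew, -⟩ := h.2 m hj
  rw [List.getD_eq_getElem _ _ hj, ← heq] at hnew
  exact hnew (List.mem_take_iff_getElem.2 ⟨i, by omega, rfl⟩)

theorem IsGreedyTrace.forall_mem {P : List Bool → Prop}
    (hP : ∀ w i j, okT w i j → P w → P (applyT w i j)) {α : List Bool} (hα : P α)
    {L : List (List Bool)} (h : IsGreedyTrace α L) : ∀ w ∈ L, P w := by
  obtain ⟨t, ht⟩ := List.head?_eq_some_iff.1 h.1
  have hget (m : ℕ) (hm : m < L.length) : P (L.getD m []) := by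
    induction m with
    | zero => simpa [ht] using hα
    | succ m ih =>
      obtain ⟨i, j, hok, heq, -⟩ := h.2 m hm
      exact heq ▸ hP _ _ _ hok (ih (by omega))
  intro w hw
  obtain ⟨m, hm, rfl⟩ := List.getElem_of_mem hw
  exact List.getD_eq_getElem _ _ hm ▸ hget m hm

theorem IsGreedyTrace.concat {α w : List Bool} {L : List (List Bool)} (h : IsGreedyTrace α L)
    (hw : GreedyNext {v | v ∈ L} (L.getD (L.length - 1) []) w) : IsGreedyTrace α (L ++ [w]) := by
  have hpos := h.length_pos
  refine ⟨by simp [h.1], fun m hm ↦ ?_⟩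
  rw [List.length_append, List.length_singleton] at hm
  rw [List.getD_append _ _ _ _ (by omega : m < L.length),
    List.take_append_of_le_length (by omega)]
  by_cases hlt : m + 1 < L.length
  · rw [List.getD_append _ _ _ _ hlt]
    exact h.2 m hlt
  · obtain rfl : m = L.length - 1 := by omega
    rw [Nat.sub_add_cancel (by omega : 1 ≤ L.length), List.take_length,
      List.getD_append_right _ _ _ _ le_rfl]
    simpa using hw

theorem GreedyPath.exists_isGreedyTrace {α y : List Bool} {U : Set (List Bool)}
    (h : GreedyPath α U y) :
    ∃ L, IsGreedyTrace α L ∧ {w | w ∈ L} = U ∧ L.getD (L.length - 1) [] = y := by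
  suffices ∀ t, Relation.ReflTransGen GreedyStep ({α}, α) t →
      ∃ L, IsGreedyTrace α L ∧ {w | w ∈ L} = t.1 ∧ L.getD (L.length - 1) [] = t.2 from this _ h
  intro t ht
  induction ht with
  | refl => exact ⟨[α], ⟨rfl, by simp⟩, by simp, rfl⟩
  | tail _ hstep ih =>
    obtain ⟨L, hL, hmem, hlast⟩ := ih
    refine ⟨_, hL.concat (hmem ▸ hlast ▸ hstep.1), ?_, by simp⟩
    rw [hstep.2, ← hmem]
    ext w
    simp [or_comm]

theorem IsGreedyTrace.greedyPath_take {α : List Bool} {L : List (List Bool)}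
    (h : IsGreedyTrace α L) {m : ℕ} (hm : m < L.length) :
    GreedyPath α {w | w ∈ L.take (m + 1)} (L.getD m []) := by
  induction m with
  | zero =>
    obtain ⟨t, rfl⟩ := List.head?_eq_some_iff.1 h.1
    simpa [GreedyPath] using Relation.ReflTransGen.refl
  | succ m ih =>
    refine (ih (by omega)).tail ⟨h.2 m hm, ?_⟩
    ext w
    simp only [List.take_succ_eq_append_getElem hm, List.getD_eq_getElem _ _ hm, List.mem_append,
      List.mem_singleton, Set.mem_ofPred_eq, Set.mem_insert_iff, or_comm]

theorem isGen_iff_exists_greedyPath {P : List Bool → Prop}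
    (hP : ∀ w i j, okT w i j → P w → P (applyT w i j)) {α : List Bool} :
    IsGen P α ↔ P α ∧ ∃ y, GreedyPath α {w | P w} y := by
  refine and_congr_right fun hα ↦ ⟨?_, ?_⟩
  · rintro ⟨L, ⟨hhead, hnodup, hLP, hsteps, -⟩, hall⟩
    have htrace : IsGreedyTrace α L := by
      refine ⟨hhead, fun m hm ↦ ?_⟩
      obtain ⟨i, j, hok, heq, hmin⟩ := hsteps m hm
      refine ⟨i, j, hok, heq, ?_, fun i' j' hok' ↦ hmin i' j' hok' (hP _ _ _ hok' (hLP _ ?_))⟩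
      · have := hnodup.sublist (List.take_sublist (m + 2) L)
        rw [List.take_succ_eq_append_getElem hm, ← List.concat_eq_append,
          List.nodup_concat] at this
        simpa [hm] using this.1
      · rw [List.getD_eq_getElem _ _ (by omega)]
        exact List.getElem_mem _
    have hpos := htrace.length_pos
    have hpath := htrace.greedyPath_take (Nat.sub_one_lt_of_lt hpos)
    rw [Nat.sub_add_cancel (by omega : 1 ≤ L.length), List.take_length] at hpath
    exact ⟨_, (Set.Subset.antisymm hLP hall : {w | w ∈ L} = {w | P w}) ▸ hpath⟩
  · rintro ⟨y, hpath⟩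
    obtain ⟨L, hL, hmem, -⟩ := hpath.exists_isGreedyTrace
    have hall (w : List Bool) (hw : P w) : w ∈ L := hmem.ge hw
    have hLP := hL.forall_mem hP hα
    refine ⟨L, ⟨hL.1, hL.nodup, hLP, fun m hm ↦ ?_, fun i j _ ↦ hall _⟩, hall⟩
    obtain ⟨i, j, hok, heq, -, hmin⟩ := hL.2 m hm
    exact ⟨i, j, hok, heq, fun i' j' hok' _ ↦ hmin i' j' hok'⟩

theorem GreedyNext.append {U : Set (List Bool)} {w w' s : List Bool}
    (h : GreedyNext ((· ++ s) ⁻¹' U) w w') : GreedyNext U (w ++ s) (w' ++ s) := by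
  obtain ⟨i, j, hok, rfl, hnew, hmin⟩ := h
  refine ⟨i, j, (okT_append_iff hok.1 hok.2.1 s).2 hok, (applyT_append hok.1 hok.2.1 s).symm,
    hnew, fun i' j' hok' hnew' ↦ ?_⟩
  by_cases hin : i' < w.length ∧ j' < w.length
  · rw [applyT_append hin.1 hin.2] at hnew'
    exact hmin i' j' ((okT_append_iff hin.1 hin.2 s).1 hok') hnew'
  · exact hok.le_of_append hok' (by omega)

theorem greedySteps_append {s : List Bool} {V : Set (List Bool)} {p t : Set (List Bool) × List Bool}
    (h : Relation.ReflTransGen GreedyStep p t) (hV : (· ++ s) ⁻¹' V = p.1) :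
    Relation.ReflTransGen GreedyStep (V, p.2 ++ s) (V ∪ (· ++ s) '' t.1, t.2 ++ s) := by
  induction h with
  | refl => rw [← hV, Set.union_eq_left.2 (Set.image_preimage_subset _ _)]
  | @tail q r hq hstep ih =>
    refine ih.tail ⟨GreedyNext.append ?_, ?_⟩
    · rw [Set.preimage_union, hV, Set.preimage_image_eq _ (List.append_left_injective s),
        Set.union_eq_right.2 (subset_of_greedySteps hq)]
      exact hstep.1
    · simp only
      rw [hstep.2, Set.image_insert_eq, Set.union_insert]

theorem GreedyPath.append {x y : List Bool} {U : Set (List Bool)} (h : GreedyPath x U y)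
    (s : List Bool) : GreedyPath (x ++ s) ((· ++ s) '' U) (y ++ s) := by
  have := greedySteps_append (V := {x ++ s}) (s := s) h (by ext; simp)
  rwa [Set.union_eq_right.2 (by simpa using h.start_mem)] at this

theorem preimage_append_image_append_of_ne {b c : Bool} (h : b ≠ c) (U : Set (List Bool)) :
    (· ++ [c]) ⁻¹' ((· ++ [b]) '' U) = ∅ := by
  ext y
  simp [h]

theorem GreedyPath.glue {x y x' y' : List Bool} {U U' : Set (List Bool)} {b c : Bool}
    (hbc : b ≠ c) (h : GreedyPath x U y)
    (hnext : GreedyNext ((· ++ [b]) '' U) (y ++ [b]) (x' ++ [c])) (h' : GreedyPath x' U' y') :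
    GreedyPath (x ++ [b]) ((· ++ [b]) '' U ∪ (· ++ [c]) '' U') (y' ++ [c]) := by
  have hpre : (· ++ [c]) ⁻¹' insert (x' ++ [c]) ((· ++ [b]) '' U) = {x'} := by
    rw [Set.insert_eq, Set.preimage_union, preimage_append_image_append_of_ne hbc, Set.union_empty]
    ext
    simp
  have hrest := greedySteps_append h' hpre
  have hmem : x' ++ [c] ∈ (· ++ [b]) '' U ∪ (· ++ [c]) '' U' := Or.inr ⟨x', h'.start_mem, rfl⟩
  rw [Set.insert_union, Set.insert_eq_of_mem hmem] at hrest
  exact ((h.append [b]).tail ⟨hnext, rfl⟩).trans hrest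

theorem okT.eq_of_lt {w : List Bool} {i i' j : ℕ} (h : okT w i j) (h' : okT w i' j)
    (hij : i < j) (hij' : i' < j) : i = i' := by
  obtain ⟨-, -, hone, -, hzeros⟩ := h
  obtain ⟨-, -, hone', -, hzeros'⟩ := h'
  rcases lt_trichotomy i i' with hlt | rfl | hlt
  · exact absurd (hone'.symm.trans (hzeros i' (by omega) (by omega))) (by decide)
  · rfl
  · exact absurd (hone.symm.trans (hzeros' i (by omega) (by omega))) (by decide)

theorem okT.of_append_false {w : List Bool} {i j : ℕ} (h : okT (w ++ [false]) i j) :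
    okT w i j ∨ (i < w.length ∧ j = w.length) := by
  have hi : i ≠ w.length := by
    rintro rfl
    simpa using h.2.2.1
  have hlen : i < w.length + 1 ∧ j < w.length + 1 := by simpa using And.intro h.1 h.2.1
  by_cases hj : j = w.length
  · exact Or.inr ⟨by omega, hj⟩
  · exact Or.inl ((okT_append_iff (by omega) (by omega) _).1 h)

theorem okT.of_append_true {w : List Bool} {i j : ℕ} (h : okT (w ++ [true]) i j) :
    okT w i j ∨ (i = w.length ∧ j < w.length) := by
  have hj : j ≠ w.length := by
    rintro rfl
    simpa using h.2.2.2.1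
  have hlen : i < w.length + 1 ∧ j < w.length + 1 := by simpa using And.intro h.1 h.2.1
  by_cases hi : i = w.length
  · exact Or.inr ⟨hi, by omega⟩
  · exact Or.inl ((okT_append_iff (by omega) (by omega) _).1 h)

theorem IsStuck.applyT_append_mem {U : Set (List Bool)} {w s : List Bool} {i j : ℕ}
    (h : IsStuck ((· ++ s) ⁻¹' U) w) (hok : okT w i j) : applyT (w ++ s) i j ∈ U :=
  applyT_append hok.1 hok.2.1 s ▸ h i j hok

theorem IsStuck.greedyNext_append_false {U : Set (List Bool)} {w : List Bool} {i : ℕ}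
    (h : IsStuck ((· ++ [false]) ⁻¹' U) w) (hok : okT (w ++ [false]) i w.length)
    (hnew : applyT (w ++ [false]) i w.length ∉ U) :
    GreedyNext U (w ++ [false]) (applyT (w ++ [false]) i w.length) := by
  have hi : i < w.length := hok.of_append_false.elim And.left And.left
  refine ⟨i, w.length, hok, rfl, hnew, fun i' j' hok' hnew' ↦ Or.inr ?_⟩
  rcases hok'.of_append_false with hin | ⟨hi', rfl⟩
  · exact absurd (h.applyT_append_mem hin) hnew'
  · exact ⟨hok.eq_of_lt hok' hi hi', le_rfl⟩

theorem IsStuck.greedyNext_append_true {U : Set (List Bool)} {w : List Bool} {j : ℕ}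
    (h : IsStuck ((· ++ [true]) ⁻¹' U) w) (hok : okT (w ++ [true]) w.length j)
    (hmin : ∀ j', okT (w ++ [true]) w.length j' → j ≤ j')
    (hnew : applyT (w ++ [true]) w.length j ∉ U) :
    GreedyNext U (w ++ [true]) (applyT (w ++ [true]) w.length j) := by
  refine ⟨w.length, j, hok, rfl, hnew, fun i' j' hok' hnew' ↦ Or.inr ?_⟩
  rcases hok'.of_append_true with hin | ⟨rfl, -⟩
  · exact absurd (h.applyT_append_mem hin) hnew'
  · exact ⟨rfl, hmin j' hok'⟩

theorem IsStuck.append_true {U : Set (List Bool)} {w : List Bool}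
    (h : IsStuck ((· ++ [true]) ⁻¹' U) w) (hlast : w.getD (w.length - 1) false = true) :
    IsStuck U (w ++ [true]) := by
  intro i j hok
  rcases hok.of_append_true with hin | ⟨rfl, hj⟩
  · exact h.applyT_append_mem hin
  · obtain ⟨-, -, -, hzero, hzeros⟩ := hok
    have hone : (w ++ [true]).getD (w.length - 1) false = true := by
      rw [List.getD_append _ _ _ _ (by omega), hlast]
    rcases eq_or_ne j (w.length - 1) with rfl | hne
    · exact absurd (hone.symm.trans hzero) (by decide)
    · exact absurd (hone.symm.trans (hzeros (w.length - 1) (by omega) (by omega))) (by decide)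

/-- The paper's `C_n(0,k)`: the words of length `n` with `k` ones. -/
def words (n k : ℕ) : Set (List Bool) := {w | w.length = n ∧ w.count true = k}

theorem memC_zero_iff {n k : ℕ} {w : List Bool} : memC n 0 k w ↔ w ∈ words n k := by
  simp [memC, words]

theorem okT.applyT_mem_words {n k : ℕ} {w : List Bool} {i j : ℕ} (h : okT w i j)
    (hw : w ∈ words n k) : applyT w i j ∈ words n k :=
  ⟨(length_applyT w i j).trans hw.1, h.count_applyT.trans hw.2⟩

theorem isStuck_of_words_subset {n k : ℕ} {w : List Bool} {U : Set (List Bool)}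
    (hw : w ∈ words n k) (h : words n k ⊆ U) : IsStuck U w :=
  fun _ _ hok ↦ h (hok.applyT_mem_words hw)

theorem append_false_mem_words {n k : ℕ} {w : List Bool} :
    w ++ [false] ∈ words (n + 1) k ↔ w ∈ words n k := by
  simp [words]

theorem append_true_mem_words {n k : ℕ} {w : List Bool} :
    w ++ [true] ∈ words (n + 1) (k + 1) ↔ w ∈ words n k := by
  simp [words]

theorem exists_append_singleton_of_mem_words {n k : ℕ} {w : List Bool} (h : w ∈ words (n + 1) k) :
    ∃ v b, w = v ++ [b] := by
  refine (List.eq_nil_or_concat' w).resolve_left ?_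
  rintro rfl
  simpa using h.1

theorem words_succ_succ (n k : ℕ) :
    words (n + 1) (k + 1) =
      (· ++ [false]) '' words n (k + 1) ∪ (· ++ [true]) '' words n k := by
  ext w
  constructor
  · intro h
    obtain ⟨v, b, rfl⟩ := exists_append_singleton_of_mem_words h
    cases b
    · exact Or.inl ⟨v, append_false_mem_words.1 h, rfl⟩
    · exact Or.inr ⟨v, append_true_mem_words.1 h, rfl⟩
  · rintro (⟨v, hv, rfl⟩ | ⟨v, hv, rfl⟩)
    · exact append_false_mem_words.2 hv
    · exact append_true_mem_words.2 hv

theorem le_of_mem_words {n k : ℕ} {w : List Bool} (h : w ∈ words n k) : k ≤ n :=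
  h.1 ▸ h.2 ▸ List.count_le_length

theorem words_zero (n : ℕ) : words n 0 = {List.replicate n false} := by
  ext w
  simp [words, List.eq_replicate_iff, List.count_eq_zero]

theorem words_self (n : ℕ) : words n n = {List.replicate n true} := by
  ext w
  simp only [words, Set.mem_ofPred_eq, Set.mem_singleton_iff, List.eq_replicate_iff]
  refine and_congr_right fun hw ↦ ?_
  rw [← hw, List.count_eq_length]
  simp [eq_comm]

theorem length_betaC {n k i : ℕ} (h : i + k ≤ n) : (betaC n k i).length = n := by
  simp only [betaC, List.length_append, List.length_replicate]
  omega

theorem getD_betaC (n k i t : ℕ) :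
    (betaC n k i).getD t false = decide (i ≤ t ∧ t < i + k) := by
  simp only [betaC, List.getD_eq_getElem?_getD, List.getElem?_append, List.getElem?_replicate,
    List.length_append, List.length_replicate]
  grind

theorem betaC_injective {n k : ℕ} (hk : 1 ≤ k) : Function.Injective (betaC n k) := by
  intro i j hij
  have hi := getD_betaC n k j i
  have hj := getD_betaC n k i j
  rw [← hij, getD_betaC, decide_eq_decide] at hi
  rw [hij, getD_betaC, decide_eq_decide] at hj
  omega

theorem betaC_mem_words {n k i : ℕ} (h : i + k ≤ n) : betaC n k i ∈ words n k :=
  ⟨length_betaC h, by simp [betaC, List.count_replicate]⟩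

theorem betaC_succ_left {n k i : ℕ} (h : i + k ≤ n) :
    betaC (n + 1) k i = betaC n k i ++ [false] := by
  rw [betaC, betaC, show n + 1 - i - k = n - i - k + 1 by omega, List.replicate_succ']
  simp

theorem betaC_succ_succ {n k i : ℕ} (h : i + k = n) :
    betaC (n + 1) (k + 1) i = betaC n k i ++ [true] := by
  simp [betaC, ← h, List.replicate_succ', Nat.add_assoc]

theorem betaC_zero (n i : ℕ) (h : i ≤ n) : betaC n 0 i = List.replicate n false := by
  simp [betaC, List.replicate_append_replicate, Nat.add_sub_cancel' h]

theorem betaC_self (n : ℕ) : betaC n n 0 = List.replicate n true := by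
  simp [betaC]

theorem exists_eq_betaC_of_mem_words_one {n : ℕ} {w : List Bool} (h : w ∈ words n 1) :
    ∃ i ≤ n - 1, w = betaC n 1 i := by
  obtain ⟨hlen, hcount⟩ := h
  have hmem : true ∈ w := List.count_pos_iff.1 (hcount ▸ one_pos)
  obtain ⟨u, v, rfl⟩ := List.append_of_mem hmem
  rw [List.count_append, List.count_cons_self] at hcount
  have hu : u ∈ words u.length 0 := ⟨rfl, by omega⟩
  have hv : v ∈ words v.length 0 := ⟨rfl, by omega⟩
  rw [words_zero, Set.mem_singleton_iff] at hu hv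
  rw [List.length_append, List.length_cons] at hlen
  refine ⟨u.length, by omega, ?_⟩
  rw [betaC, ← hu, show n - u.length - 1 = v.length by omega, ← hv]
  simp

theorem getD_betaC_append_singleton {n k i : ℕ} (h : i + k ≤ n) (b : Bool) (t : ℕ) :
    (betaC n k i ++ [b]).getD t false = decide ((i ≤ t ∧ t < i + k) ∨ (b = true ∧ t = n)) := by
  rcases lt_trichotomy t n with ht | rfl | ht
  · rw [List.getD_append _ _ _ _ (by rwa [length_betaC h]), getD_betaC]
    simp [ht.ne]
  · rw [List.getD_append_right _ _ _ _ (length_betaC h).le, length_betaC h]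
    cases b <;> grind
  · rw [List.getD_eq_default _ _ (by simpa [length_betaC h] using ht)]
    cases b <;> grind

theorem okT_betaC_append_false {n k i : ℕ} (h : i + k < n) :
    okT (betaC n (k + 1) i ++ [false]) (i + k) n := by
  simp only [okT, List.length_append, List.length_singleton,
    length_betaC (by omega : i + (k + 1) ≤ n),
    getD_betaC_append_singleton (by omega : i + (k + 1) ≤ n)]
  grind

theorem okT_betaC_append_true {n k i : ℕ} (h : i + k < n) :
    okT (betaC n k i ++ [true]) n (i + k) := by
  simp only [okT, List.length_append, List.length_singleton, length_betaC h.le,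
    getD_betaC_append_singleton h.le]
  grind

theorem le_of_okT_betaC_append_true {n k i j : ℕ} (h : i + k ≤ n) (hi : k = 0 → i = 0)
    (hok : okT (betaC n k i ++ [true]) n j) : i + k ≤ j := by
  simp only [okT, getD_betaC_append_singleton h] at hok
  obtain ⟨-, -, -, hzero, hzeros⟩ := hok
  by_contra hlt
  have := hzeros (i + k - 1)
  grind

theorem eq_of_getD_eq {α : Type*} {u v : List α} {d : α} (hlen : u.length = v.length)
    (h : ∀ t, u.getD t d = v.getD t d) : u = v :=
  List.ext_getElem hlen fun t hu hv ↦ by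
    rw [← List.getD_eq_getElem _ d hu, h, List.getD_eq_getElem]

theorem applyT_betaC_append_false {n k i : ℕ} (h : i + k < n) :
    applyT (betaC n (k + 1) i ++ [false]) (i + k) n = betaC n k i ++ [true] := by
  have h' : i + (k + 1) ≤ n := h
  refine eq_of_getD_eq (d := false) (by simp [length_applyT, length_betaC, h', h.le]) fun t ↦ ?_
  rw [getD_applyT (by simp [length_betaC h']), getD_betaC_append_singleton h',
    getD_betaC_append_singleton h.le]
  grind

theorem applyT_betaC_append_true {n k i : ℕ} (h : i + k < n) :
    applyT (betaC n k i ++ [true]) n (i + k) = betaC n (k + 1) i ++ [false] := by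
  have h' : i + (k + 1) ≤ n := h
  refine eq_of_getD_eq (d := false) (by simp [length_applyT, length_betaC, h', h.le]) fun t ↦ ?_
  rw [getD_applyT (by grind [length_betaC]), getD_betaC_append_singleton h',
    getD_betaC_append_singleton h.le]
  grind

theorem GreedyPath.glue_betaC_append_false {x y' : List Bool} {U U' : Set (List Bool)}
    {n k i : ℕ} (hi : i + k < n) (h : GreedyPath x U (betaC n (k + 1) i))
    (hstuck : IsStuck U (betaC n (k + 1) i)) (h' : GreedyPath (betaC n k i) U' y') :
    GreedyPath (x ++ [false]) ((· ++ [false]) '' U ∪ (· ++ [true]) '' U') (y' ++ [true]) := by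
  have hlen : (betaC n (k + 1) i).length = n := length_betaC (by omega)
  have hstuck' : IsStuck ((· ++ [false]) ⁻¹' ((· ++ [false]) '' U)) (betaC n (k + 1) i) := by
    rwa [Set.preimage_image_eq _ (List.append_left_injective _)]
  have hnext := hstuck'.greedyNext_append_false (i := i + k)
    (by rw [hlen]; exact okT_betaC_append_false hi)
    (by simp [hlen, applyT_betaC_append_false hi])
  rw [hlen, applyT_betaC_append_false hi] at hnext
  exact h.glue (by decide) hnext h'

theorem GreedyPath.glue_betaC_append_true {x y' : List Bool} {U U' : Set (List Bool)}
    {n k i : ℕ} (hi : i + k < n) (hi₀ : k = 0 → i = 0) (h : GreedyPath x U (betaC n k i))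
    (hstuck : IsStuck U (betaC n k i)) (h' : GreedyPath (betaC n (k + 1) i) U' y') :
    GreedyPath (x ++ [true]) ((· ++ [true]) '' U ∪ (· ++ [false]) '' U') (y' ++ [false]) := by
  have hlen : (betaC n k i).length = n := length_betaC hi.le
  have hstuck' : IsStuck ((· ++ [true]) ⁻¹' ((· ++ [true]) '' U)) (betaC n k i) := by
    rwa [Set.preimage_image_eq _ (List.append_left_injective _)]
  have hnext := hstuck'.greedyNext_append_true (j := i + k)
    (by rw [hlen]; exact okT_betaC_append_true hi)
    (by rw [hlen]; exact fun j' ↦ le_of_okT_betaC_append_true hi.le hi₀)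
    (by simp [hlen, applyT_betaC_append_true hi])
  rw [hlen, applyT_betaC_append_true hi] at hnext
  exact h.glue (by decide) hnext h'

/-- The greedy algorithm started at `betaC n k i` ends at `betaC n k (lastIndex n k i)`. This is the
right-justified word unless the run starts there. In that case the parity arises because the run
ends at the left-justified word exactly if the one with `k - 1` ones ends one position short of its
start. -/
def lastIndex (n k i : ℕ) : ℕ :=
  if i + k < n then n - k else if Even k then 0 else n - k - 1

theorem lastIndex_of_lt {n k i : ℕ} (h : i + k < n) : lastIndex n k i = n - k := if_pos h

theorem lastIndex_of_even {n k i : ℕ} (h : i + k = n) (hk : Even k) : lastIndex n k i = 0 := by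
  simp [lastIndex, h, hk]

theorem lastIndex_of_not_even {n k i : ℕ} (h : i + k = n) (hk : ¬ Even k) :
    lastIndex n k i = n - k - 1 := by
  simp [lastIndex, h, hk]

theorem lastIndex_zero_of_not_even (n : ℕ) {k : ℕ} (hk : ¬ Even k) :
    lastIndex n k 0 = n - k := by
  rw [lastIndex, if_neg hk]
  split_ifs <;> omega

theorem lastIndex_le (n k i : ℕ) : lastIndex n k i ≤ n - k := by
  unfold lastIndex
  split_ifs <;> omega

theorem greedyPath_betaC_zero {n i : ℕ} (h : i ≤ n) :
    GreedyPath (betaC n 0 i) (words n 0) (betaC n 0 (lastIndex n 0 i)) := by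
  rw [words_zero, betaC_zero n i h, betaC_zero n _ (lastIndex_le n 0 i)]
  exact .refl

theorem greedyPath_betaC_self (n : ℕ) :
    GreedyPath (betaC n n 0) (words n n) (betaC n n (lastIndex n n 0)) := by
  have hlast : lastIndex n n 0 = 0 := by simpa using lastIndex_le n n 0
  rw [words_self, hlast, betaC_self]
  exact .refl

theorem greedyPath_betaC_succ_of_lt {n k i : ℕ} (hi : i + k < n)
    (hzeros : GreedyPath (betaC n (k + 1) i) (words n (k + 1))
      (betaC n (k + 1) (lastIndex n (k + 1) i)))
    (hones : ∀ e, e + k < n → GreedyPath (betaC n k e) (words n k) (betaC n k (n - k))) :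
    GreedyPath (betaC (n + 1) (k + 1) i) (words (n + 1) (k + 1))
      (betaC (n + 1) (k + 1) (n - k)) := by
  have hlast := lastIndex_le n (k + 1) i
  have hlt : lastIndex n (k + 1) i + k < n := by omega
  rw [betaC_succ_left hi, betaC_succ_succ (by omega : n - k + k = n), words_succ_succ]
  exact hzeros.glue_betaC_append_false hlt
    (isStuck_of_words_subset (betaC_mem_words (by omega)) subset_rfl) (hones _ hlt)

theorem greedyPath_betaC_succ_of_eq {n k i : ℕ} (hi : i + k = n) (hkn : k < n)
    (hones : GreedyPath (betaC n k i) (words n k) (betaC n k (lastIndex n k i)))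
    (hzeros : ∀ e, e + k < n → GreedyPath (betaC n (k + 1) e) (words n (k + 1))
      (betaC n (k + 1) (lastIndex n (k + 1) e))) :
    GreedyPath (betaC (n + 1) (k + 1) i) (words (n + 1) (k + 1))
      (betaC (n + 1) (k + 1) (lastIndex (n + 1) (k + 1) i)) := by
  obtain ⟨e, he, he₀, hones_last, hzeros_last⟩ : ∃ e, e + k < n ∧ (k = 0 → e = 0) ∧
      lastIndex n k i = e ∧ lastIndex n (k + 1) e = lastIndex (n + 1) (k + 1) i := by
    by_cases hk : Even k
    · refine ⟨0, by omega, fun _ ↦ rfl, lastIndex_of_even hi hk, ?_⟩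
      have hk' : ¬ Even (k + 1) := by simpa [Nat.even_add_one] using hk
      rw [lastIndex_zero_of_not_even n hk', lastIndex_of_not_even (by omega) hk']
      omega
    · have hk' : Even (k + 1) := Nat.even_add_one.2 hk
      refine ⟨n - k - 1, by omega, ?_, lastIndex_of_not_even hi hk, ?_⟩
      · rintro rfl
        exact absurd Even.zero hk
      · rw [lastIndex_of_even (by omega) hk', lastIndex_of_even (by omega) hk']
  have hlast := lastIndex_le n (k + 1) e
  rw [hones_last] at hones
  have hpath := hones.glue_betaC_append_true he he₀
    (isStuck_of_words_subset (betaC_mem_words he.le) subset_rfl) (hzeros e he)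
  rwa [Set.union_comm, ← words_succ_succ, ← betaC_succ_succ hi, ← betaC_succ_left (by omega),
    hzeros_last] at hpath

theorem greedyPath_betaC {n k i : ℕ} (h : i + k ≤ n) :
    GreedyPath (betaC n k i) (words n k) (betaC n k (lastIndex n k i)) := by
  induction n generalizing k i with
  | zero =>
    obtain ⟨rfl, rfl⟩ : i = 0 ∧ k = 0 := by omega
    exact greedyPath_betaC_self 0
  | succ n ih =>
    rcases k with _ | k
    · exact greedyPath_betaC_zero h
    rcases (by omega : i + k < n ∨ (i + k = n ∧ k < n) ∨ (i = 0 ∧ k = n))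
      with hi | ⟨hi, hkn⟩ | ⟨rfl, rfl⟩
    · rw [lastIndex_of_lt (by omega), Nat.add_sub_add_right]
      exact greedyPath_betaC_succ_of_lt hi (ih hi) fun e he ↦ lastIndex_of_lt he ▸ ih he.le
    · exact greedyPath_betaC_succ_of_eq hi hkn (ih hi.le) fun e he ↦ ih he
    · exact greedyPath_betaC_self _

theorem greedyPath_betaC_of_lt {n k i : ℕ} (h : i + k < n) :
    GreedyPath (betaC n k i) (words n k) (betaC n k (n - k)) :=
  lastIndex_of_lt h ▸ greedyPath_betaC h.le

theorem isStuck_betaC_append_true {n k : ℕ} (hk : 1 ≤ k) (hkn : k ≤ n) {U : Set (List Bool)}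
    (h : IsStuck ((· ++ [true]) ⁻¹' U) (betaC n k (n - k))) :
    IsStuck U (betaC n k (n - k) ++ [true]) := by
  refine h.append_true ?_
  rw [length_betaC (by omega), getD_betaC, decide_eq_true_eq]
  omega

theorem exists_greedyPath_ssubset_append_false {n k : ℕ} {w : List Bool} {U : Set (List Bool)}
    (hk : 1 ≤ k) (hkn : k < n) (hpath : GreedyPath w U (betaC n (k + 1) (n - (k + 1))))
    (hstuck : IsStuck U (betaC n (k + 1) (n - (k + 1)))) (hU : U ⊂ words n (k + 1)) :
    ∃ V, V ⊂ words (n + 1) (k + 1) ∧ IsStuck V (betaC n k (n - k) ++ [true]) ∧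
      GreedyPath (w ++ [false]) V (betaC n k (n - k) ++ [true]) := by
  refine ⟨_, ?_, isStuck_betaC_append_true hk hkn.le ?_,
    hpath.glue_betaC_append_false (by omega) hstuck (greedyPath_betaC_of_lt (by omega))⟩
  · obtain ⟨v, hv, hvU⟩ := Set.exists_of_ssubset hU
    rw [words_succ_succ, Set.ssubset_iff_of_subset
      (Set.union_subset_union_left _ (Set.image_mono hU.subset))]
    exact ⟨v ++ [false], Or.inl ⟨v, hv, rfl⟩, by simpa using hvU⟩
  · refine isStuck_of_words_subset (k := k) (betaC_mem_words (by omega)) fun v hv ↦ ?_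
    exact Or.inr ⟨v, hv, rfl⟩

theorem exists_greedyPath_ssubset_append_true {n k : ℕ} {w : List Bool} {U : Set (List Bool)}
    (hk : 1 ≤ k) (hkn : k < n) (hpath : GreedyPath w U (betaC n k (n - k)))
    (hstuck : IsStuck U (betaC n k (n - k))) (hU : U ⊆ words n k) :
    ∃ V, V ⊂ words (n + 1) (k + 1) ∧ IsStuck V (betaC n k (n - k) ++ [true]) ∧
      GreedyPath (w ++ [true]) V (betaC n k (n - k) ++ [true]) := by
  refine ⟨_, ?_, isStuck_betaC_append_true hk hkn.le ?_, hpath.append [true]⟩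
  · rw [words_succ_succ, Set.ssubset_iff_of_subset
      ((Set.image_mono hU).trans Set.subset_union_right)]
    exact ⟨betaC n (k + 1) 0 ++ [false],
      Or.inl ⟨_, betaC_mem_words (by omega), rfl⟩, by simp⟩
  · rwa [Set.preimage_image_eq _ (List.append_left_injective _)]

theorem two_le_of_ne_betaC {n k : ℕ} {w : List Bool} (hw : w ∈ words n k)
    (hne : ∀ i ≤ n - k, w ≠ betaC n k i) : 2 ≤ k := by
  by_contra hlt
  obtain rfl | rfl : k = 0 ∨ k = 1 := by omega
  · rw [words_zero] at hw
    exact hne 0 (by omega) (hw.trans (betaC_zero n 0 (by omega)).symm)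
  · obtain ⟨i, hi, rfl⟩ := exists_eq_betaC_of_mem_words_one hw
    exact hne i hi rfl

theorem exists_greedyPath_ssubset_of_ne_betaC {n k : ℕ} {w : List Bool} (hw : w ∈ words n k)
    (hne : ∀ i ≤ n - k, w ≠ betaC n k i) :
    ∃ U, U ⊂ words n k ∧ IsStuck U (betaC n k (n - k)) ∧ GreedyPath w U (betaC n k (n - k)) := by
  have hk := two_le_of_ne_betaC hw hne
  have hkn := le_of_mem_words hw
  induction n generalizing k w with
  | zero => omega
  | succ n ih =>
    obtain ⟨k, rfl⟩ : ∃ c, k = c + 1 := ⟨k - 1, by omega⟩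
    rw [Nat.add_sub_add_right] at hne ⊢
    rw [betaC_succ_succ (by omega : n - k + k = n)]
    obtain ⟨v, b, rfl⟩ := exists_append_singleton_of_mem_words hw
    cases b with
    | false =>
      have hv := append_false_mem_words.1 hw
      have hkn' := le_of_mem_words hv
      obtain ⟨U, hU, hstuck, hpath⟩ := ih hv
        (fun i hi heq ↦ hne i (by omega) (heq ▸ (betaC_succ_left (by omega)).symm)) hk hkn'
      exact exists_greedyPath_ssubset_append_false (by omega) hkn' hpath hstuck hU
    | true =>
      have hv := append_true_mem_words.1 hw
      have hv_ne : v ≠ betaC n k (n - k) := fun heq ↦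
        hne (n - k) le_rfl (heq ▸ (betaC_succ_succ (by omega)).symm)
      have hkn' : k < n := by
        refine (le_of_mem_words hv).lt_of_ne ?_
        rintro rfl
        rw [words_self] at hv
        exact hv_ne (by simpa [betaC_self] using hv)
      obtain ⟨U, hU, hstuck, hpath⟩ : ∃ U ⊆ words n k, IsStuck U (betaC n k (n - k)) ∧
          GreedyPath v U (betaC n k (n - k)) := by
        by_cases hβ : ∃ i ≤ n - k, v = betaC n k i
        · obtain ⟨i, hi, rfl⟩ := hβ
          have hik : i ≠ n - k := fun h ↦ hv_ne (h ▸ rfl)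
          exact ⟨_, subset_rfl, isStuck_of_words_subset (betaC_mem_words (by omega)) subset_rfl,
            greedyPath_betaC_of_lt (by omega)⟩
        · push Not at hβ
          obtain ⟨U, hU, h⟩ := ih hv hβ (two_le_of_ne_betaC hv hβ) hkn'.le
          exact ⟨U, hU.subset, h⟩
      exact exists_greedyPath_ssubset_append_true (by omega) hkn' hpath hstuck hU

theorem isGen_iff_exists_eq_betaC {n k : ℕ} (hkn : k ≤ n) {α : List Bool} :
    IsGen (memC n 0 k) α ↔ ∃ i ≤ n - k, α = betaC n k i := by
  rw [isGen_iff_exists_greedyPath fun w i j hok hw ↦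
    memC_zero_iff.2 (hok.applyT_mem_words (memC_zero_iff.1 hw))]
  simp only [memC_zero_iff, Set.ofPred_mem_eq]
  constructor
  · rintro ⟨hα, y, hpath⟩
    by_contra! hne
    obtain ⟨U, hU, hstuck, hpath'⟩ := exists_greedyPath_ssubset_of_ne_betaC hα hne
    exact hU.not_subset (hpath.subset_of_isStuck hpath' hstuck)
  · rintro ⟨i, hi, rfl⟩
    exact ⟨betaC_mem_words (by omega), _, greedyPath_betaC (by omega)⟩

theorem gen_zero (n k : ℕ) (hk : 1 ≤ k) (hkn : k ≤ n) :
    {α : List Bool | IsGen (memC n 0 k) α} = {w : List Bool | ∃ i ≤ n - k, w = betaC n k i} ∧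
      Nat.card {α : List Bool | IsGen (memC n 0 k) α} = n - k + 1 := by
  have hgen : {α : List Bool | IsGen (memC n 0 k) α} = {w | ∃ i ≤ n - k, w = betaC n k i} :=
    Set.ext fun α ↦ isGen_iff_exists_eq_betaC hkn
  have himage : {w | ∃ i ≤ n - k, w = betaC n k i} = betaC n k '' Set.Iic (n - k) := by
    ext w
    simp [eq_comm]
  refine ⟨hgen, ?_⟩
  rw [hgen, himage, Nat.card_image_of_injective (betaC_injective hk)]
  simp
end

section
/- For n ≥ 2k-1, the set GenF(n,k) of words α in F_n(2,k) for which the greedy homogeneous-transposition algorithm starting at α produces an exhaustive Gray code of F_n(2,k) is exactly {0^i 1 (01)^{k-1} 0^{n-2k+1-i} : 0 ≤ i ≤ n-2k+1}; in particular |GenF(n,k)| = n-2k+2. -/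
/-- Membership in `F_n(2,k)`. -/
def memF (n k : ℕ) (w : List Bool) : Prop :=
  w.length = n ∧ w.count true = k ∧ ¬ [true, true] <:+: w

/-- `α_{n,k}^i = 0^i 1 (01)^{k-1} 0^{n-2k+1-i}` -/
def alphaF (n k i : ℕ) : List Bool :=
  List.replicate i false ++ [true] ++ (List.replicate (k - 1) [false, true]).flatten ++
    List.replicate (n + 1 - 2 * k - i) false

/-!
If the ones of a word of `F_n(2,k)` sit at `t₁ < ⋯ < tₖ`, the numbers
`tₖ - 2 (k - 1), …, t₂ - 2, t₁` form a weakly decreasing sequence bounded by `M = n + 1 - 2 k`, and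
every such sequence occurs. A homogeneous transposition changes one entry of the sequence; the
greedy rule prefers to change a later entry, and then to make it as small as possible. So, as long
as it can, the algorithm stays in the level of sequences with a given first entry `v`, where it acts
like the algorithm for `k - 1` entries bounded by `v`.

The words `α_{n,k}^i` encode the constant sequences. By induction on `k`, the algorithm started at
`c, …, c` visits everything: it exhausts level `c`, then the levels below `c`, going straight down
or restarting from `0` according to the parity of `k`, and then climbs through the levels above `c`.
From a start `v, p` with `p` not equal to `v, …, v`, it leaves level `v` from `v, …, v`, from where
it cannot reach a lower level; it climbs to `M, …, M` and halts there without having visited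
`0, …, 0`.
-/

namespace GenF

section Greedy

variable {α β ι : Type*} {move : ι → α → α → Prop} {move' : ι → β → β → Prop}
  {V W : Set α} {x y : α} {f : α → β} {S : Set α}

/-- The greedy algorithm halts at the object `x` with visited set `V`. -/
def Stuck (move : ι → α → α → Prop) (V : Set α) (x : α) : Prop :=
  ∀ a y, move a x y → y ∈ V

theorem Stuck.map (hf : ∀ a y', move' a (f x) y' → ∃ y, move a x y ∧ f y = y')
    (hx : Stuck move V x) : Stuck move' (f '' V) (f x) := by
  intro a y' hy'
  obtain ⟨y, hy, rfl⟩ := hf a y' hy'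
  exact Set.mem_image_of_mem f (hx a y hy)

section LE

variable [LE ι]

/-- One step of the greedy algorithm for labelled moves `move a x y`: from the current object `x`,
with visited set `V`, take the move of least label among those leading outside `V`. States are
pairs (visited set, current object). -/
inductive GreedyStep (move : ι → α → α → Prop) : Set α × α → Set α × α → Prop
  | mk {V : Set α} {x y : α} {a : ι} (hmove : move a x y) (hnew : y ∉ V)
      (hmin : ∀ b z, move b x z → z ∉ V → a ≤ b) : GreedyStep move (V, x) (insert y V, y)

/-- A finite sequence of greedy steps between two states. -/
abbrev GreedyRun (move : ι → α → α → Prop) : Set α × α → Set α × α → Prop :=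
  Relation.ReflTransGen (GreedyStep move)

theorem Stuck.not_greedyStep (h : Stuck move V x) (t : Set α × α) :
    ¬ GreedyStep move (V, x) t := by
  rintro ⟨hmove, hnew, -⟩
  exact hnew (h _ _ hmove)

theorem GreedyRun.mem (h : GreedyRun move (V, x) (W, y)) (hx : x ∈ V) : y ∈ W := by
  rcases h.cases_tail with h | ⟨_, -, ⟨-, -, -⟩⟩
  · obtain ⟨rfl, rfl⟩ := Prod.mk.inj h
    exact hx
  · exact Set.mem_insert _ _

theorem GreedyStep.map (hinj : Set.InjOn f S)
    (hS : ∀ x ∈ S, ∀ a y, move a x y → y ∈ S)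
    (hf : ∀ x ∈ S, ∀ a y', move' a (f x) y' ↔ ∃ y, move a x y ∧ f y = y')
    (hVS : V ⊆ S) (hxS : x ∈ S) (h : GreedyStep move (V, x) (W, y)) :
    W ⊆ S ∧ y ∈ S ∧ GreedyStep move' (f '' V, f x) (f '' W, f y) := by
  obtain ⟨hmove, hnew, hmin⟩ := h
  have hyS := hS x hxS _ y hmove
  refine ⟨Set.insert_subset hyS hVS, hyS, ?_⟩
  rw [Set.image_insert_eq]
  refine .mk ((hf x hxS _ _).2 ⟨y, hmove, rfl⟩)
    (fun hy ↦ hnew <| (hinj.mem_image_iff hVS hyS).1 hy) ?_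
  intro b z' hz' hz'V
  obtain ⟨z, hz, rfl⟩ := (hf x hxS b z').1 hz'
  exact hmin b z hz fun hzV ↦ hz'V (Set.mem_image_of_mem f hzV)

theorem GreedyRun.map (hinj : Set.InjOn f S)
    (hS : ∀ x ∈ S, ∀ a y, move a x y → y ∈ S)
    (hf : ∀ x ∈ S, ∀ a y', move' a (f x) y' ↔ ∃ y, move a x y ∧ f y = y')
    (hVS : V ⊆ S) (hxS : x ∈ S) (h : GreedyRun move (V, x) (W, y)) :
    W ⊆ S ∧ y ∈ S ∧ GreedyRun move' (f '' V, f x) (f '' W, f y) := by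
  suffices ∀ t, GreedyRun move (V, x) t →
      t.1 ⊆ S ∧ t.2 ∈ S ∧ GreedyRun move' (f '' V, f x) (f '' t.1, f t.2) from this _ h
  intro t ht
  induction ht with
  | refl => exact ⟨hVS, hxS, .refl⟩
  | tail _ hstep ih =>
    obtain ⟨hW, hy, hrun⟩ := ih
    obtain ⟨hW', hy', hstep'⟩ := hstep.map hinj hS hf hW hy
    exact ⟨hW', hy', hrun.tail hstep'⟩

end LE

variable [PartialOrder ι]

theorem greedyStep_rightUnique (hmove : ∀ a x y z, move a x y → move a x z → y = z) :
    Relator.RightUnique (GreedyStep move) := by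
  rintro _ _ _ ⟨hy, hyV, hymin⟩ ⟨hz, hzV, hzmin⟩
  obtain rfl := le_antisymm (hymin _ _ hz hzV) (hzmin _ _ hy hyV)
  obtain rfl := hmove _ _ _ _ hy hz
  rfl

theorem GreedyRun.eq_of_stuck {s : Set α × α} (hmove : ∀ a x y z, move a x y → move a x z → y = z)
    (hV : GreedyRun move s (V, x)) (hx : Stuck move V x)
    (hW : GreedyRun move s (W, y)) (hy : Stuck move W y) : V = W := by
  rcases Relation.ReflTransGen.total_of_right_unique (greedyStep_rightUnique hmove) hV hW
    with h | h
  · rcases h.cases_head with h | ⟨_, h, -⟩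
    · exact congrArg Prod.fst h
    · exact (hx.not_greedyStep _ h).elim
  · rcases h.cases_head with h | ⟨_, h, -⟩
    · exact (congrArg Prod.fst h).symm
    · exact (hy.not_greedyStep _ h).elim

end Greedy

section GreedyList

variable {P : List Bool → Prop} {α b : List Bool} {L : List (List Bool)}

/-- The labelled moves underlying `IsGreedyList P`. Labels are pairs (position of the `1`, position
of the `0`), ordered lexicographically. -/
def WordMove (P : List Bool → Prop) (a : ℕ ×ₗ ℕ) (w w' : List Bool) : Prop :=
  okT w (ofLex a).1 (ofLex a).2 ∧ w' = applyT w (ofLex a).1 (ofLex a).2 ∧ P w'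

theorem wordMove_unique (a : ℕ ×ₗ ℕ) (x y z : List Bool) (hy : WordMove P a x y)
    (hz : WordMove P a x z) : y = z :=
  hy.2.1.trans hz.2.1.symm

/-- `IsGreedyList` without the requirement that the algorithm halts at the end of the list. -/
def IsGreedyPrefix (P : List Bool → Prop) (α : List Bool) (L : List (List Bool)) : Prop :=
  L.head? = some α ∧ L.Nodup ∧ (∀ w ∈ L, P w) ∧
  ∀ m, m + 1 < L.length →
    ∃ i j, okT (L.getD m []) i j ∧ L.getD (m + 1) [] = applyT (L.getD m []) i j ∧
      ∀ i' j', okT (L.getD m []) i' j' → P (applyT (L.getD m []) i' j') →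
        applyT (L.getD m []) i' j' ∉ L.take (m + 1) →
        i < i' ∨ (i = i' ∧ j ≤ j')

theorem isGreedyList_iff : IsGreedyList P α L ↔
    IsGreedyPrefix P α L ∧ Stuck (WordMove P) {b | b ∈ L} (L.getD (L.length - 1) []) := by
  have hstuck : Stuck (WordMove P) {b | b ∈ L} (L.getD (L.length - 1) []) ↔
      ∀ i j, okT (L.getD (L.length - 1) []) i j → P (applyT (L.getD (L.length - 1) []) i j) →
        applyT (L.getD (L.length - 1) []) i j ∈ L := by
    constructor
    · exact fun h i j hok hP ↦ h (toLex (i, j)) _ ⟨hok, rfl, hP⟩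
    · rintro h a _ ⟨hok, rfl, hP⟩
      exact h _ _ hok hP
  rw [hstuck]
  simp only [IsGreedyList, IsGreedyPrefix, and_assoc]

theorem IsGreedyPrefix.greedyStep (h : IsGreedyPrefix P α L) {m : ℕ} (hm : m + 1 < L.length) :
    GreedyStep (WordMove P) ({b | b ∈ L.take (m + 1)}, L.getD m [])
      ({b | b ∈ L.take (m + 2)}, L.getD (m + 1) []) := by
  obtain ⟨-, hnodup, hP, hstep⟩ := h
  obtain ⟨i, j, hok, htransp, hmin⟩ := hstep m hm
  have htake : L.take (m + 2) = L.take (m + 1) ++ [L.getD (m + 1) []] := by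
    rw [List.getD_eq_getElem _ _ hm, List.take_append_getElem hm]
  have hset : {b | b ∈ L.take (m + 2)} = insert (L.getD (m + 1) []) {b | b ∈ L.take (m + 1)} := by
    ext b
    simp only [htake, List.mem_append, List.mem_singleton, Set.mem_ofPred_eq, Set.mem_insert_iff,
      or_comm]
  have hnew : L.getD (m + 1) [] ∉ L.take (m + 1) := by
    have := hnodup.sublist (List.take_sublist (m + 2) L)
    rw [htake, List.nodup_append] at this
    exact fun hmem ↦ this.2.2 _ hmem _ (List.mem_singleton_self _) rfl
  have hmem : L.getD (m + 1) [] ∈ L := by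
    rw [List.getD_eq_getElem _ _ hm]
    exact List.getElem_mem hm
  rw [hset]
  refine .mk (a := toLex (i, j)) ⟨hok, htransp, hP _ hmem⟩ hnew ?_
  rintro a _ ⟨hok', rfl, hP'⟩ hnew'
  exact Prod.Lex.le_iff.2 (hmin _ _ hok' hP' hnew')

theorem IsGreedyPrefix.greedyRun (h : IsGreedyPrefix P α L) :
    GreedyRun (WordMove P) ({α}, α) ({b | b ∈ L}, L.getD (L.length - 1) []) := by
  obtain ⟨l, rfl⟩ : ∃ l, L = α :: l := List.head?_eq_some_iff.1 h.1
  suffices ∀ m < (α :: l).length, GreedyRun (WordMove P) ({α}, α)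
      ({b | b ∈ (α :: l).take (m + 1)}, (α :: l).getD m []) by
    simpa using this l.length
  intro m hm
  induction m with
  | zero => simpa using Relation.ReflTransGen.refl
  | succ m ih => exact (ih (by omega)).tail (h.greedyStep hm)

theorem IsGreedyPrefix.concat {V : Set (List Bool)} (h : IsGreedyPrefix P α L)
    (hstep : GreedyStep (WordMove P) ({b | b ∈ L}, L.getD (L.length - 1) []) (V, b)) :
    IsGreedyPrefix P α (L ++ [b]) := by
  obtain ⟨hhead, hnodup, hP, hL⟩ := h
  cases hstep with | mk hmove hnew hmin
  obtain ⟨hok, htransp, hPb⟩ := hmove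
  have hpos : 0 < L.length := List.length_pos_iff.2 fun h ↦ by simp [h] at hhead
  refine ⟨by simp [hhead], ?_, ?_, ?_⟩
  · exact List.nodup_append.2
      ⟨hnodup, List.nodup_singleton b, fun c hc d hd ↦ by
        rintro rfl
        exact hnew (List.mem_singleton.1 hd ▸ hc)⟩
  · exact List.forall_mem_append.2 ⟨hP, List.forall_mem_singleton.2 hPb⟩
  · intro m hm
    rw [List.length_append, List.length_singleton] at hm
    rw [List.getD_append _ _ _ _ (by omega), List.take_append_of_le_length (by omega)]
    rcases (show m + 1 < L.length ∨ m + 1 = L.length by omega) with hm | hm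
    · rw [List.getD_append _ _ _ _ hm]
      exact hL m hm
    · obtain rfl : m = L.length - 1 := by omega
      rw [hm, List.take_length, List.getD_append_right _ _ _ _ le_rfl, Nat.sub_self,
        List.getD_cons_zero]
      exact ⟨_, _, hok, htransp, fun i j hok' hP' hnew' ↦
        Prod.Lex.le_iff.1 (hmin (toLex (i, j)) _ ⟨hok', rfl, hP'⟩ hnew')⟩

theorem exists_isGreedyPrefix (hα : P α) {s : Set (List Bool) × List Bool}
    (h : GreedyRun (WordMove P) ({α}, α) s) :
    ∃ L, IsGreedyPrefix P α L ∧ s = ({b | b ∈ L}, L.getD (L.length - 1) []) := by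
  induction h with
  | refl => exact ⟨[α], by simpa [IsGreedyPrefix] using hα, by simp⟩
  | tail _ hstep ih =>
    obtain ⟨L, hL, rfl⟩ := ih
    cases hstep with
    | @mk _ _ b a hmove hnew hmin =>
      refine ⟨L ++ [b], hL.concat (.mk hmove hnew hmin), ?_⟩
      ext <;> simp [or_comm]

theorem isGen_iff_of_greedyRun {V : Set (List Bool)} (hα : P α)
    (hrun : GreedyRun (WordMove P) ({α}, α) (V, b)) (hb : Stuck (WordMove P) V b) :
    IsGen P α ↔ ∀ w, P w → w ∈ V := by
  constructor
  · rintro ⟨-, L, hL, hall⟩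
    obtain ⟨hpre, hstuck⟩ := isGreedyList_iff.1 hL
    rwa [hrun.eq_of_stuck wordMove_unique hb hpre.greedyRun hstuck]
  · intro hall
    obtain ⟨L, hpre, hstate⟩ := exists_isGreedyPrefix hα hrun
    obtain ⟨rfl, rfl⟩ := Prod.mk.inj hstate
    exact ⟨hα, L, isGreedyList_iff.2 ⟨hpre, hb⟩, hall⟩

end GreedyList

section Box

variable {k M N u v a : ℕ} {p w w' : List ℕ} {l : ℕ ×ₗ ℕ} {U V W W' : Set (List ℕ)}

/-- The partitions with `k` parts (zero parts included) of size at most `M`, written in weakly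
decreasing order. For `n + 1 = M + 2 * k` they encode `F_n(2,k)`: if the ones of a word occupy the
positions `t₁ < ⋯ < tₖ`, counted from `0`, its parts are `tₖ - 2 (k - 1), …, t₂ - 2, t₁`. -/
def box (k M : ℕ) : Set (List ℕ) := {w | w.length = k ∧ (M :: w).IsChain (· ≥ ·)}

@[simp]
theorem mem_box_zero : w ∈ box 0 M ↔ w = [] := by
  simp +contextual [box]

@[simp]
theorem cons_mem_box : v :: p ∈ box (k + 1) M ↔ v ≤ M ∧ p ∈ box k v := by
  simp [box, and_left_comm]

theorem length_of_mem_box (hw : w ∈ box k M) : w.length = k := hw.1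

theorem exists_cons_of_mem_box (hw : w ∈ box (k + 1) M) :
    ∃ v p, w = v :: p ∧ v ≤ M ∧ p ∈ box k v := by
  obtain ⟨v, p, rfl⟩ := List.exists_cons_of_length_eq_add_one hw.1
  exact ⟨v, p, rfl, cons_mem_box.1 hw⟩

theorem box_mono (h : M ≤ N) : box k M ⊆ box k N := by
  intro w hw
  cases k with
  | zero => simpa using hw
  | succ k =>
    obtain ⟨v, p, rfl, hv, hp⟩ := exists_cons_of_mem_box hw
    exact cons_mem_box.2 ⟨hv.trans h, hp⟩

theorem replicate_mem_box (k : ℕ) (h : a ≤ M) : List.replicate k a ∈ box k M := by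
  induction k generalizing M with
  | zero => simp
  | succ k ih => exact cons_mem_box.2 ⟨h, ih le_rfl⟩

theorem le_of_replicate_mem_box (hk : k ≠ 0) (h : List.replicate k a ∈ box k M) : a ≤ M := by
  obtain ⟨k, rfl⟩ := Nat.exists_eq_succ_of_ne_zero hk
  exact (cons_mem_box.1 h).1

theorem eq_replicate_of_mem_box_zero (hw : w ∈ box k 0) : w = List.replicate k 0 := by
  induction k generalizing w with
  | zero => simpa using hw
  | succ k ih =>
    obtain ⟨v, p, rfl, hv, hp⟩ := exists_cons_of_mem_box hw
    obtain rfl := Nat.le_zero.1 hv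
    rw [ih hp, List.replicate_succ]

/-- The moves of the greedy algorithm in terms of partitions in `box k M`: change a single part.
The label is the pair of positions transposed in the encoded words. -/
inductive Shift : ℕ → ℕ → ℕ ×ₗ ℕ → List ℕ → List ℕ → Prop
  | head {k M v u : ℕ} {p : List ℕ} (hv : v :: p ∈ box (k + 1) M) (hu : u :: p ∈ box (k + 1) M)
      (hne : u ≠ v) : Shift (k + 1) M (toLex (v + 2 * k, u + 2 * k)) (v :: p) (u :: p)
  | tail {k M v : ℕ} {l : ℕ ×ₗ ℕ} {p q : List ℕ} (hv : v ≤ M) (h : Shift k v l p q) :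
      Shift (k + 1) M l (v :: p) (v :: q)

theorem Shift.left_mem (h : Shift k M l w w') : w ∈ box k M := by
  induction h with
  | head hv => exact hv
  | tail hv _ ih => exact cons_mem_box.2 ⟨hv, ih⟩

theorem Shift.right_mem (h : Shift k M l w w') : w' ∈ box k M := by
  induction h with
  | head _ hu => exact hu
  | tail hv _ ih => exact cons_mem_box.2 ⟨hv, ih⟩

theorem Shift.label_fst_lt (h : Shift k M l w w') : (ofLex l).1 + 1 < M + 2 * k := by
  induction h with
  | head hv =>
    have := (cons_mem_box.1 hv).1
    simp only [ofLex_toLex]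
    omega
  | tail => omega

theorem stuck_of_box_subset (h : box k M ⊆ V) : Stuck (Shift k M) V w :=
  fun _ _ hs ↦ h hs.right_mem

theorem stuck_cons_iff (hw : v :: p ∈ box (k + 1) M) (hV : v :: p ∈ V) :
    Stuck (Shift (k + 1) M) V (v :: p) ↔
      Stuck (Shift k v) (List.cons v ⁻¹' V) p ∧ ∀ u, u :: p ∈ box (k + 1) M → u :: p ∈ V := by
  constructor
  · refine fun h ↦ ⟨fun l q hq ↦ h l _ (.tail (cons_mem_box.1 hw).1 hq), fun u hu ↦ ?_⟩
    by_cases huv : u = v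
    · rwa [huv]
    · exact h _ _ (.head hw hu huv)
  · rintro ⟨htail, hhead⟩ l w' h
    cases h with
    | head _ hu => exact hhead _ hu
    | tail _ h => exact htail _ _ h

theorem greedyStep_tail (hU : List.cons v ⁻¹' U = ∅) (hv : v ≤ M)
    (h : GreedyStep (Shift k v) (W, p) (W', w)) :
    GreedyStep (Shift (k + 1) M) (U ∪ List.cons v '' W, v :: p)
      (U ∪ List.cons v '' W', v :: w) := by
  cases h with | mk hmove hnew hmin
  have hmem (q : List ℕ) : v :: q ∈ U ∪ List.cons v '' W ↔ q ∈ W := by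
    have : v :: q ∉ U := Set.eq_empty_iff_forall_notMem.1 hU q
    simp [this]
  rw [Set.image_insert_eq, Set.union_insert]
  refine .mk (.tail hv hmove) (by rwa [hmem]) ?_
  rintro l' w' (⟨-, -, -⟩ | ⟨-, h'⟩) hw'
  · exact Prod.Lex.le_iff.2 (.inl (by have := hmove.label_fst_lt; simp only [ofLex_toLex]; omega))
  · exact hmin _ _ h' (by rwa [hmem] at hw')

theorem greedyRun_tail (hU : List.cons v ⁻¹' U = ∅) (hv : v ≤ M)
    (h : GreedyRun (Shift k v) (W, p) (W', w)) :
    GreedyRun (Shift (k + 1) M) (U ∪ List.cons v '' W, v :: p)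
      (U ∪ List.cons v '' W', v :: w) :=
  h.lift (fun s : Set (List ℕ) × List ℕ ↦ (U ∪ List.cons v '' s.1, v :: s.2))
    fun _ _ ↦ greedyStep_tail hU hv

theorem greedyStep_head (hw : v :: p ∈ box (k + 1) M) (hV : v :: p ∈ V)
    (hstuck : Stuck (Shift k v) (List.cons v ⁻¹' V) p) (hu : u :: p ∈ box (k + 1) M)
    (hnew : u :: p ∉ V) (hlt : ∀ u' < u, u' :: p ∈ box (k + 1) M → u' :: p ∈ V) :
    GreedyStep (Shift (k + 1) M) (V, v :: p) (insert (u :: p) V, u :: p) := by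
  refine .mk (.head hw hu (by rintro rfl; exact hnew hV)) hnew ?_
  rintro l w' (⟨-, hu', -⟩ | ⟨-, h'⟩) hw'
  · refine Prod.Lex.le_iff.2 (.inr ⟨rfl, ?_⟩)
    simp only [ofLex_toLex]
    by_contra h
    exact hw' (hlt _ (by omega) hu')
  · exact (hw' (hstuck _ _ h')).elim

end Box

section Levels

variable {k M u v a c m : ℕ} {p w : List ℕ} {D : Set ℕ} {U V W : Set (List ℕ)}

/-- The partitions with `k + 1` parts whose largest part belongs to `D`. -/
def levels (k : ℕ) (D : Set ℕ) : Set (List ℕ) := ⋃ u ∈ D, List.cons u '' box k u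

@[simp]
theorem cons_mem_levels : u :: p ∈ levels k D ↔ u ∈ D ∧ p ∈ box k u := by
  simp [levels, and_comm]

theorem levels_singleton (k u : ℕ) : levels k {u} = List.cons u '' box k u :=
  Set.biUnion_singleton _ _

theorem levels_union (k : ℕ) (D E : Set ℕ) : levels k (D ∪ E) = levels k D ∪ levels k E :=
  Set.biUnion_union _ _ _

theorem levels_Iic (k M : ℕ) : levels k (Set.Iic M) = box (k + 1) M := by
  ext w
  cases w with
  | nil => simp [levels, box]
  | cons v p => simp

theorem preimage_cons_levels_eq_empty (hu : u ∉ D) : List.cons u ⁻¹' levels k D = ∅ := by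
  ext q
  simp [hu]

/-- The parts of the partition at which the greedy algorithm in `box k M` started at `c, …, c`
halts. -/
def terminal (k M c : ℕ) : ℕ := if c < M then M else if Even k then 0 else M - 1

theorem terminal_le (k M c : ℕ) : terminal k M c ≤ M := by
  unfold terminal
  split_ifs <;> omega

theorem terminal_of_lt (h : c < M) : terminal k M c = M := if_pos h

theorem terminal_self_of_even (hk : Even k) : terminal k M M = 0 := by simp [terminal, hk]

theorem terminal_self_of_odd (hk : Odd k) : terminal k M M = M - 1 := by
  simp [terminal, Nat.not_even_iff_odd.2 hk]

/-- Started at a constant partition, the greedy algorithm visits all of `box k M`. -/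
def ExhaustsBoxes (k : ℕ) : Prop := ∀ M c, c ≤ M →
  GreedyRun (Shift k M) ({List.replicate k c}, List.replicate k c)
    (box k M, List.replicate k (terminal k M c))

theorem exhaustsBoxes_zero : ExhaustsBoxes 0 := by
  intro M c _
  have : box 0 M = {[]} := Set.ext fun _ ↦ mem_box_zero
  rw [this]
  exact .refl

theorem ExhaustsBoxes.fill_level (hk : ExhaustsBoxes k) (hu : u ≤ M) (ha : a ≤ u)
    (hU : List.cons u ⁻¹' U = ∅) :
    GreedyRun (Shift (k + 1) M) (insert (u :: List.replicate k a) U, u :: List.replicate k a)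
      (U ∪ levels k {u}, u :: List.replicate k (terminal k u a)) := by
  simpa [levels_singleton] using greedyRun_tail hU hu (hk u a ha)

theorem ExhaustsBoxes.enter_level (hk : ExhaustsBoxes k) (hu : u ≤ M) (ha : a ≤ u)
    (hw : v :: List.replicate k a ∈ box (k + 1) M) (hV : v :: List.replicate k a ∈ V)
    (hstuck : Stuck (Shift k v) (List.cons v ⁻¹' V) (List.replicate k a))
    (hempty : List.cons u ⁻¹' V = ∅)
    (hlt : ∀ u' < u, List.replicate k a ∈ box k u' → u' :: List.replicate k a ∈ V) :
    GreedyRun (Shift (k + 1) M) (V, v :: List.replicate k a)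
      (V ∪ levels k {u}, u :: List.replicate k (terminal k u a)) := by
  refine .head (greedyStep_head hw hV hstuck (cons_mem_box.2 ⟨hu, replicate_mem_box k ha⟩)
    (Set.eq_empty_iff_forall_notMem.1 hempty _) fun u' hu' h ↦ hlt u' hu' (cons_mem_box.1 h).2)
    (hk.fill_level hu ha hempty)

theorem ExhaustsBoxes.climb (hk : ExhaustsBoxes k) (hvu : v < u) (hu : u ≤ M)
    (hV : List.replicate (k + 1) v ∈ V)
    (hstuck : Stuck (Shift (k + 1) v) V (List.replicate (k + 1) v))
    (hbetween : levels k (Set.Ioo v u) ⊆ V) (hempty : List.cons u ⁻¹' V = ∅) :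
    GreedyRun (Shift (k + 1) M) (V, List.replicate (k + 1) v)
        (V ∪ levels k {u}, List.replicate (k + 1) u) ∧
      Stuck (Shift (k + 1) u) (V ∪ levels k {u}) (List.replicate (k + 1) u) := by
  have hbox : List.replicate (k + 1) v ∈ box (k + 1) v := replicate_mem_box _ le_rfl
  obtain ⟨htail, hhead⟩ := (stuck_cons_iff hbox hV).1 hstuck
  have hlt : ∀ u' < u, List.replicate k v ∈ box k u' → u' :: List.replicate k v ∈ V := by
    intro u' hu' h
    rcases le_or_gt u' v with hle | hgt
    · exact hhead u' (cons_mem_box.2 ⟨hle, h⟩)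
    · exact hbetween (cons_mem_levels.2 ⟨⟨hgt, hu'⟩, h⟩)
  have hmem : List.replicate (k + 1) u ∈ V ∪ levels k {u} :=
    .inr (cons_mem_levels.2 ⟨rfl, replicate_mem_box k le_rfl⟩)
  constructor
  · have := hk.enter_level hu hvu.le (box_mono (hvu.le.trans hu) hbox) hV htail hempty hlt
    rwa [terminal_of_lt hvu] at this
  · refine (stuck_cons_iff (replicate_mem_box _ le_rfl) hmem).2 ⟨stuck_of_box_subset ?_, ?_⟩
    · exact fun q hq ↦ .inr (cons_mem_levels.2 ⟨rfl, hq⟩)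
    · intro u' hu'
      obtain ⟨hle, hrep⟩ := cons_mem_box.1 hu'
      rcases hle.eq_or_lt with rfl | hlt'
      · exact hmem
      · obtain rfl : k = 0 := by
          by_contra hk0
          exact hlt'.not_ge (le_of_replicate_mem_box hk0 hrep)
        exact .inl (hlt u' hlt' hrep)

theorem ExhaustsBoxes.ascend (hk : ExhaustsBoxes k) (hvm : v ≤ m) (hm : m ≤ M)
    (hV : List.replicate (k + 1) v ∈ V)
    (hstuck : Stuck (Shift (k + 1) v) V (List.replicate (k + 1) v))
    (hempty : ∀ u ∈ Set.Ioc v m, List.cons u ⁻¹' V = ∅) :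
    GreedyRun (Shift (k + 1) M) (V, List.replicate (k + 1) v)
        (V ∪ levels k (Set.Ioc v m), List.replicate (k + 1) m) ∧
      Stuck (Shift (k + 1) m) (V ∪ levels k (Set.Ioc v m)) (List.replicate (k + 1) m) := by
  induction m, hvm using Nat.le_induction with
  | base =>
    have : levels k (Set.Ioc v v) = ∅ := by simp [levels]
    rw [this, Set.union_empty]
    exact ⟨.refl, hstuck⟩
  | succ m hvm ih =>
    obtain ⟨hrun, hstuck'⟩ := ih (by omega) fun u hu ↦ hempty u ⟨hu.1, hu.2.trans (by omega)⟩
    have hnext : List.cons (m + 1) ⁻¹' (V ∪ levels k (Set.Ioc v m)) = ∅ := by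
      rw [Set.preimage_union, hempty (m + 1) ⟨by omega, le_rfl⟩,
        preimage_cons_levels_eq_empty (by simp), Set.union_empty]
    have hIoc : Set.Ioc v (m + 1) = Set.Ioc v m ∪ {m + 1} := by
      ext u
      simp only [Set.mem_Ioc, Set.mem_union, Set.mem_singleton_iff]
      omega
    obtain ⟨hrun', hstuck''⟩ := hk.climb (by omega) hm (hrun.mem hV) hstuck'
      (by simp [levels, Set.Ioo_add_one_right_eq_Ioc]) hnext
    rw [hIoc, levels_union, ← Set.union_assoc]
    exact ⟨hrun.trans hrun', hstuck''⟩

theorem ExhaustsBoxes.descend (hk : ExhaustsBoxes k) (hodd : Odd k) (hc : c ≤ M)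
    (hempty : ∀ u ≤ c, List.cons u ⁻¹' U = ∅) :
    GreedyRun (Shift (k + 1) M) (insert (List.replicate (k + 1) c) U, List.replicate (k + 1) c)
      (U ∪ levels k (Set.Iic c), List.replicate (k + 1) 0) := by
  induction c generalizing U with
  | zero =>
    have hIic : Set.Iic 0 = {0} := by ext; simp
    simpa [hIic, terminal_self_of_odd hodd, ← List.replicate_succ]
      using hk.fill_level hc le_rfl (hempty 0 le_rfl)
  | succ c ih =>
    have hfill := hk.fill_level hc le_rfl (hempty (c + 1) le_rfl)
    rw [terminal_self_of_odd hodd, Nat.add_sub_cancel] at hfill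
    have hmem : (c + 1) :: List.replicate k c ∈ U ∪ levels k {c + 1} :=
      .inr (cons_mem_levels.2 ⟨rfl, replicate_mem_box k (by omega)⟩)
    have hempty' : ∀ u ≤ c, List.cons u ⁻¹' (U ∪ levels k {c + 1}) = ∅ := by
      intro u hu
      rw [Set.preimage_union, hempty u (by omega),
        preimage_cons_levels_eq_empty (by simp only [Set.mem_singleton_iff]; omega),
        Set.union_empty]
    have hstep := greedyStep_head (M := M) (u := c)
      (cons_mem_box.2 ⟨hc, replicate_mem_box k (by omega)⟩) hmem
      (stuck_of_box_subset fun q hq ↦ .inr (cons_mem_levels.2 ⟨rfl, hq⟩))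
      (replicate_mem_box (k + 1) (by omega))
      (Set.eq_empty_iff_forall_notMem.1 (hempty' c le_rfl) _)
      fun u' hu' h ↦ (hu'.not_ge (le_of_replicate_mem_box hodd.pos.ne' (cons_mem_box.1 h).2)).elim
    have hIic : Set.Iic (c + 1) = {c + 1} ∪ Set.Iic c := by
      ext u
      simp only [Set.mem_Iic, Set.mem_union, Set.mem_singleton_iff]
      omega
    rw [hIic, levels_union, ← Set.union_assoc]
    exact hfill.trans (.head hstep (ih (by omega) hempty'))

theorem ExhaustsBoxes.exhaust_lower_of_even (hk : ExhaustsBoxes k) (heven : Even k) (hc : c ≤ M) :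
    GreedyRun (Shift (k + 1) M) ({List.replicate (k + 1) c}, List.replicate (k + 1) c)
      (levels k (Set.Iic c), List.replicate (k + 1) (c - 1)) := by
  have hfill := hk.fill_level (U := ∅) hc le_rfl rfl
  rw [insert_empty_eq, Set.empty_union, terminal_self_of_even heven] at hfill
  rcases c.eq_zero_or_pos with rfl | hpos
  · have hIic : Set.Iic 0 = {0} := by ext; simp
    rwa [hIic]
  have hempty : ∀ u < c, List.cons u ⁻¹' levels k {c} = ∅ := fun u hu ↦
    preimage_cons_levels_eq_empty hu.ne
  have henter := hk.enter_level (M := M) (u := 0) (V := levels k {c}) (Nat.zero_le M) le_rfl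
    (cons_mem_box.2 ⟨hc, replicate_mem_box k hpos.le⟩)
    (cons_mem_levels.2 ⟨rfl, replicate_mem_box k hpos.le⟩)
    (stuck_of_box_subset fun q hq ↦ cons_mem_levels.2 ⟨rfl, hq⟩) (hempty 0 hpos) (by simp)
  rw [terminal_self_of_even heven, ← levels_union] at henter
  have hzero : box (k + 1) 0 ⊆ levels k ({c} ∪ {0}) := by
    rw [← levels_Iic]
    exact Set.biUnion_mono (fun u hu ↦ .inr (Nat.le_zero.1 hu)) fun _ _ ↦ subset_rfl
  have hrep := hzero (replicate_mem_box (k + 1) le_rfl)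
  obtain ⟨hclimb, -⟩ := hk.ascend (M := M) (m := c - 1) (Nat.zero_le _) (by omega) hrep
    (stuck_of_box_subset hzero) fun u hu ↦ preimage_cons_levels_eq_empty (by
      simp only [Set.mem_Ioc, Set.mem_union, Set.mem_singleton_iff] at hu ⊢
      omega)
  have hIic : Set.Iic c = {c} ∪ {0} ∪ Set.Ioc 0 (c - 1) := by
    ext u
    simp only [Set.mem_Iic, Set.mem_union, Set.mem_singleton_iff, Set.mem_Ioc]
    omega
  rw [hIic, levels_union _ ({c} ∪ {0})]
  exact (hfill.trans henter).trans hclimb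

theorem ExhaustsBoxes.exhaust_lower (hk : ExhaustsBoxes k) (hc : c ≤ M) :
    GreedyRun (Shift (k + 1) M) ({List.replicate (k + 1) c}, List.replicate (k + 1) c)
      (box (k + 1) c, List.replicate (k + 1) (terminal (k + 1) c c)) := by
  rw [← levels_Iic]
  rcases Nat.even_or_odd k with heven | hodd
  · rw [terminal_self_of_odd heven.add_one]
    exact hk.exhaust_lower_of_even heven hc
  · rw [terminal_self_of_even hodd.add_one]
    simpa using hk.descend hodd hc (U := ∅) (by simp)

theorem ExhaustsBoxes.succ (hk : ExhaustsBoxes k) : ExhaustsBoxes (k + 1) := by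
  intro M c hc
  have hlower := hk.exhaust_lower hc
  rcases hc.eq_or_lt with rfl | hcM
  · exact hlower
  set t := terminal (k + 1) c c
  have htc : t ≤ c := terminal_le _ _ _
  have hrep := replicate_mem_box (k + 1) htc
  have hempty : ∀ u > c, List.cons u ⁻¹' levels k (Set.Iic c) = ∅ := fun u hu ↦
    preimage_cons_levels_eq_empty (by simpa using hu)
  rw [← levels_Iic] at hlower hrep
  obtain ⟨hclimb, hstuck⟩ := hk.climb (M := M) (u := c + 1) (by omega) hcM hrep
    (stuck_of_box_subset (by rw [levels_Iic]; exact box_mono htc))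
    (Set.biUnion_mono (fun u hu ↦ Nat.lt_succ_iff.1 hu.2) fun _ _ ↦ subset_rfl)
    (hempty _ (by omega))
  obtain ⟨hascend, -⟩ := hk.ascend hcM le_rfl (hclimb.mem hrep) hstuck fun u hu ↦ by
    rw [← levels_union]
    exact preimage_cons_levels_eq_empty (by
      simp only [Set.mem_Ioc, Set.mem_union, Set.mem_singleton_iff, Set.mem_Iic] at hu ⊢
      omega)
  have hIic : Set.Iic M = Set.Iic c ∪ {c + 1} ∪ Set.Ioc (c + 1) M := by
    ext u
    simp only [Set.mem_Iic, Set.mem_union, Set.mem_singleton_iff, Set.mem_Ioc]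
    omega
  rw [terminal_of_lt hcM, ← levels_Iic, hIic, levels_union, levels_union]
  exact (hlower.trans hclimb).trans hascend

theorem exhaustsBoxes (k : ℕ) : ExhaustsBoxes k := by
  induction k with
  | zero => exact exhaustsBoxes_zero
  | succ k ih => exact ih.succ

theorem exists_greedyRun_cons (hk : k ≠ 0) (hv : v ≠ 0) (hvM : v ≤ M)
    (hrun : GreedyRun (Shift k v) ({p}, p) (W, List.replicate k v))
    (hstuck : Stuck (Shift k v) W (List.replicate k v)) :
    ∃ V, GreedyRun (Shift (k + 1) M) ({v :: p}, v :: p) (V, List.replicate (k + 1) M) ∧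
      Stuck (Shift (k + 1) M) V (List.replicate (k + 1) M) ∧ List.replicate (k + 1) 0 ∉ V := by
  have hlevel := greedyRun_tail (U := ∅) (M := M) rfl hvM hrun
  simp only [Set.empty_union, Set.image_singleton, ← List.replicate_succ] at hlevel
  have hmem := hlevel.mem rfl
  have hstuck' : Stuck (Shift (k + 1) v) (List.cons v '' W) (List.replicate (k + 1) v) := by
    refine (stuck_cons_iff (replicate_mem_box _ le_rfl) hmem).2 ⟨?_, fun u hu ↦ ?_⟩
    · rwa [Set.preimage_image_eq _ List.cons_injective]
    · obtain ⟨hle, hrep⟩ := cons_mem_box.1 hu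
      rwa [hle.antisymm (le_of_replicate_mem_box hk hrep)]
  obtain ⟨hascend, hstuckM⟩ := (exhaustsBoxes k).ascend hvM le_rfl hmem hstuck' fun u hu ↦ by
    ext q
    simp [hu.1.ne]
  refine ⟨_, hlevel.trans hascend, hstuckM, ?_⟩
  simp [List.replicate_succ, hv]

theorem exists_greedyRun_of_ne_replicate (hw : w ∈ box k M) (hne : ∀ c, w ≠ List.replicate k c) :
    ∃ V, GreedyRun (Shift k M) ({w}, w) (V, List.replicate k M) ∧
      Stuck (Shift k M) V (List.replicate k M) ∧ List.replicate k 0 ∉ V := by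
  induction k generalizing w M with
  | zero => exact (hne 0 (mem_box_zero.1 hw)).elim
  | succ k ih =>
    obtain ⟨v, p, rfl, hvM, hp⟩ := exists_cons_of_mem_box hw
    have hpv : p ≠ List.replicate k v := by
      rintro rfl
      exact hne v rfl
    have hv : v ≠ 0 := by
      rintro rfl
      exact hpv (eq_replicate_of_mem_box_zero hp)
    have hk : k ≠ 0 := by
      rintro rfl
      exact hpv (mem_box_zero.1 hp)
    by_cases hconst : ∃ a, p = List.replicate k a
    · obtain ⟨a, rfl⟩ := hconst
      have hav := (le_of_replicate_mem_box hk hp).lt_of_ne fun h ↦ hpv (by rw [h])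
      have hrun := exhaustsBoxes k v a hav.le
      rw [terminal_of_lt hav] at hrun
      exact exists_greedyRun_cons hk hv hvM hrun (stuck_of_box_subset subset_rfl)
    · obtain ⟨W, hrun, hstuck, -⟩ := ih hp (not_exists.1 hconst)
      exact exists_greedyRun_cons hk hv hvM hrun hstuck

end Levels

section Positions

variable {k M N s j t v u : ℕ} {p q w w' : List ℕ} {a : ℕ ×ₗ ℕ} {S : Finset ℕ}

/-- The positions of the ones in the word encoded by a partition. -/
def positions : List ℕ → Finset ℕ
  | [] => ∅
  | v :: p => insert (v + 2 * p.length) (positions p)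

/-- The sets of `k` pairwise non-adjacent positions smaller than `N - 1`, that is, the supports of
the words in `F_n(2,k)` for `n + 1 = N`. -/
def sparse (k N : ℕ) : Set (Finset ℕ) :=
  {S | S.card = k ∧ (∀ t ∈ S, t + 1 ∉ S) ∧ ∀ t ∈ S, t + 1 < N}

theorem positions_cons (hp : p ∈ box k M) :
    positions (v :: p) = insert (v + 2 * k) (positions p) := by
  rw [positions, length_of_mem_box hp]

theorem lt_of_mem_positions (hw : w ∈ box k M) (ht : t ∈ positions w) : t + 1 < M + 2 * k := by
  induction k generalizing w M with
  | zero => simp [mem_box_zero.1 hw, positions] at ht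
  | succ k ih =>
    obtain ⟨v, p, rfl, hv, hp⟩ := exists_cons_of_mem_box hw
    rw [positions_cons hp, Finset.mem_insert] at ht
    rcases ht with rfl | ht
    · omega
    · have := ih hp ht
      omega

theorem top_notMem_positions (hp : p ∈ box k v) : v + 2 * k ∉ positions p := fun h ↦ by
  have := lt_of_mem_positions hp h
  omega

theorem erase_top_positions (hp : p ∈ box k v) :
    (positions (v :: p)).erase (v + 2 * k) = positions p := by
  rw [positions_cons hp, Finset.erase_insert (top_notMem_positions hp)]

theorem isGreatest_positions (hp : p ∈ box k v) :
    IsGreatest (positions (v :: p) : Set ℕ) (v + 2 * k) := by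
  rw [positions_cons hp]
  refine ⟨by simp, fun t ht ↦ ?_⟩
  rcases Finset.mem_insert.1 ht with rfl | ht
  · rfl
  · have := lt_of_mem_positions hp ht
    omega

theorem positions_mem_sparse (hw : w ∈ box k M) : positions w ∈ sparse k (M + 2 * k) := by
  induction k generalizing w M with
  | zero => simp [mem_box_zero.1 hw, positions, sparse]
  | succ k ih =>
    refine ⟨?_, ?_, fun _ ↦ lt_of_mem_positions hw⟩
    all_goals
      obtain ⟨v, p, rfl, -, hp⟩ := exists_cons_of_mem_box hw
      obtain ⟨hcard, hsep, hlt⟩ := ih hp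
      rw [positions_cons hp]
    · rw [Finset.card_insert_of_notMem (top_notMem_positions hp), hcard]
    · grind

theorem positions_injOn (k M : ℕ) : Set.InjOn positions (box k M) := by
  induction k generalizing M with
  | zero =>
    intro w hw w' hw' _
    rw [mem_box_zero.1 hw, mem_box_zero.1 hw']
  | succ k ih =>
    intro w hw w' hw' h
    obtain ⟨v, p, rfl, -, hp⟩ := exists_cons_of_mem_box hw
    obtain ⟨u, q, rfl, -, hq⟩ := exists_cons_of_mem_box hw'
    have htop := (isGreatest_positions hp).unique (h ▸ isGreatest_positions hq)
    obtain rfl : v = u := by omega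
    rw [ih v hp hq (by rw [← erase_top_positions hp, h, erase_top_positions hq])]

theorem exists_erase_mem_sparse (hS : S ∈ sparse (k + 1) N) :
    ∃ m ∈ S, m + 1 < N ∧ S.erase m ∈ sparse k m := by
  obtain ⟨hcard, hsep, hlt⟩ := hS
  have hne : S.Nonempty := Finset.card_pos.1 (by omega)
  have hmax := S.max'_mem hne
  refine ⟨S.max' hne, hmax, hlt _ hmax, ?_, fun t ht ht' ↦ ?_, fun t ht ↦ ?_⟩
  · rw [Finset.card_erase_of_mem hmax, hcard, Nat.add_sub_cancel]
  · exact hsep t (Finset.mem_of_mem_erase ht) (Finset.mem_of_mem_erase ht')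
  · obtain ⟨hne', htS⟩ := Finset.mem_erase.1 ht
    have hle := S.le_max' t htS
    have hsep' : t + 1 ≠ S.max' hne := fun h ↦ hsep t htS (h ▸ hmax)
    omega

theorem two_mul_le_of_mem_sparse (hS : S ∈ sparse k N) : 2 * k ≤ N := by
  induction k generalizing S N with
  | zero => omega
  | succ k ih =>
    obtain ⟨m, -, hmN, hm⟩ := exists_erase_mem_sparse hS
    have := ih hm
    omega

theorem exists_positions_eq (hS : S ∈ sparse k (M + 2 * k)) : ∃ w ∈ box k M, positions w = S := by
  induction k generalizing S M with
  | zero => exact ⟨[], mem_box_zero.2 rfl, (Finset.card_eq_zero.1 hS.1).symm⟩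
  | succ k ih =>
    obtain ⟨m, hmS, hmN, hm⟩ := exists_erase_mem_sparse hS
    obtain ⟨v, rfl⟩ := Nat.exists_eq_add_of_le' (two_mul_le_of_mem_sparse hm)
    obtain ⟨p, hp, hpS⟩ := ih hm
    refine ⟨v :: p, cons_mem_box.2 ⟨by omega, hp⟩, ?_⟩
    rw [positions_cons hp, hpS, Finset.insert_erase hmS]

/-- Homogeneous transposition of the `1` at `s` with the `0` at `j`, in terms of the set `S` of
positions of the ones. -/
def Slide (S : Finset ℕ) (s j : ℕ) : Prop :=
  s ∈ S ∧ j ∉ S ∧ ∀ t ∈ S, min s j < t → max s j ≤ t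

theorem Shift.slide (h : Shift k M a w w') :
    Slide (positions w) (ofLex a).1 (ofLex a).2 ∧
      positions w' = insert (ofLex a).2 ((positions w).erase (ofLex a).1) := by
  induction h with
  | @head k M v u p hv hu hne =>
    have hpv := (cons_mem_box.1 hv).2
    have hpu := (cons_mem_box.1 hu).2
    have hlt := fun {t} ↦ lt_of_mem_positions (t := t) hpv
    have hlt' := fun {t} ↦ lt_of_mem_positions (t := t) hpu
    simp only [ofLex_toLex, Slide]
    rw [erase_top_positions hpv, positions_cons hpu, positions_cons hpv]
    refine ⟨⟨by simp, ?_, ?_⟩, rfl⟩ <;> grind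
  | @tail _ _ _ _ _ _ _ h ih =>
    obtain ⟨hslide, hq⟩ := ih
    have hlt := fun {t} ↦ lt_of_mem_positions (t := t) h.left_mem
    have hlt' := fun {t} ↦ lt_of_mem_positions (t := t) h.right_mem
    rw [positions_cons h.left_mem, positions_cons h.right_mem, hq]
    unfold Slide at *
    refine ⟨⟨?_, ?_, ?_⟩, ?_⟩ <;> grind

theorem Slide.cons_of_top (hp : p ∈ box k v) (hq : q ∈ box k u)
    (hslide : Slide (positions (v :: p)) (v + 2 * k) j)
    (hpos : positions (u :: q) = insert j ((positions (v :: p)).erase (v + 2 * k))) :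
    j = u + 2 * k ∧ q = p := by
  have hp_lt := fun {t} ↦ lt_of_mem_positions (t := t) hp
  have hq_lt := fun {t} ↦ lt_of_mem_positions (t := t) hq
  obtain ⟨-, hj, hbetween⟩ := hslide
  rw [erase_top_positions hp] at hpos
  rw [positions_cons hp, Finset.mem_insert, not_or] at hj
  obtain rfl : j = u + 2 * k := by
    rw [positions_cons hq] at hpos
    by_contra hne
    have hj_mem : j ∈ positions q := Finset.mem_of_mem_insert_of_ne
      (hpos ▸ Finset.mem_insert_self _ _) hne
    have hu_mem : u + 2 * k ∈ positions p := Finset.mem_of_mem_insert_of_ne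
      (hpos ▸ Finset.mem_insert_self _ _) (Ne.symm hne)
    have := hbetween _ (positions_cons hp ▸ Finset.mem_insert_of_mem hu_mem)
    have := hp_lt hu_mem
    have := hq_lt hj_mem
    omega
  have hqp : positions q = positions p := by
    rw [← erase_top_positions hq, hpos, Finset.erase_insert hj.2]
  exact ⟨rfl, positions_injOn k (max u v) (box_mono (le_max_left _ _) hq)
    (box_mono (le_max_right _ _) hp) hqp⟩

theorem Slide.cons_of_tail (hp : p ∈ box k v) (hq : q ∈ box k u) (hs : s ∈ positions p)
    (hslide : Slide (positions (v :: p)) s j)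
    (hpos : positions (u :: q) = insert j ((positions (v :: p)).erase s)) :
    u = v ∧ Slide (positions p) s j ∧ positions q = insert j ((positions p).erase s) := by
  have hsv := lt_of_mem_positions hp hs
  obtain ⟨-, hj, hbetween⟩ := hslide
  simp only [positions_cons hp, Finset.mem_insert, not_or, forall_eq_or_imp] at hj hbetween
  have hjv : j < v + 2 * k := by
    have := hj.1
    have := hbetween.1
    omega
  have htop : IsGreatest (positions (u :: q) : Set ℕ) (v + 2 * k) := by
    have hp_top := isGreatest_positions hp
    rw [hpos]
    refine ⟨Finset.mem_insert_of_mem (Finset.mem_erase.2 ⟨by omega, hp_top.1⟩), fun t ht ↦ ?_⟩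
    rcases Finset.mem_insert.1 ht with rfl | ht
    · exact hjv.le
    · exact hp_top.2 (Finset.mem_of_mem_erase ht)
  obtain rfl : u = v := by
    have := (isGreatest_positions hq).unique htop
    omega
  refine ⟨rfl, ⟨hs, hj.2, hbetween.2⟩, ?_⟩
  rw [← erase_top_positions hq, hpos, positions_cons hp, Finset.erase_insert_of_ne hj.1,
    Finset.erase_right_comm, Finset.erase_insert (top_notMem_positions hp)]

theorem shift_of_slide (hw : w ∈ box k M) (hw' : w' ∈ box k M) (hslide : Slide (positions w) s j)
    (hpos : positions w' = insert j ((positions w).erase s)) : Shift k M (toLex (s, j)) w w' := by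
  induction k generalizing w w' M with
  | zero => simp [mem_box_zero.1 hw, positions, Slide] at hslide
  | succ k ih =>
    obtain ⟨v, p, rfl, hv, hp⟩ := exists_cons_of_mem_box hw
    obtain ⟨u, q, rfl, -, hq⟩ := exists_cons_of_mem_box hw'
    have hs := hslide.1
    rw [positions_cons hp, Finset.mem_insert] at hs
    rcases hs with rfl | hs
    · obtain ⟨rfl, rfl⟩ := hslide.cons_of_top hp hq hpos
      exact .head hw hw' fun h ↦ hslide.2.1 (h ▸ hslide.1)
    · obtain ⟨rfl, hslide', hpos'⟩ := hslide.cons_of_tail hp hq hs hpos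
      exact .tail hv (ih hp hq hslide' hpos')

end Positions

section Word

variable {n k s j : ℕ} {S : Finset ℕ}

/-- The word of length `n` whose ones occupy the positions in `S`. -/
def word (n : ℕ) (S : Finset ℕ) : List Bool := (List.range n).map fun t ↦ decide (t ∈ S)

@[simp]
theorem length_word (n : ℕ) (S : Finset ℕ) : (word n S).length = n := by
  simp [word]

theorem getD_word (hS : S ⊆ Finset.range n) (t : ℕ) : (word n S).getD t false = decide (t ∈ S) := by
  rcases lt_or_ge t n with h | h
  · simp [word, List.getD_eq_getElem?_getD, h]
  · have : t ∉ S := fun ht ↦ h.not_gt (Finset.mem_range.1 (hS ht))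
    simp [word, List.getD_eq_getElem?_getD, h, this]

theorem word_injOn (n : ℕ) : Set.InjOn (word n) {S | S ⊆ Finset.range n} := by
  intro S hS T hT h
  ext t
  rw [← decide_eq_decide, ← getD_word hS, h, getD_word hT]

theorem exists_word_eq (b : List Bool) : ∃ S ⊆ Finset.range b.length, word b.length S = b := by
  refine ⟨{t ∈ Finset.range b.length | b.getD t false}, Finset.filter_subset _ _,
    List.ext_getElem (length_word _ _) fun t ht ht' ↦ ?_⟩
  simp [word, ht']

theorem count_true_word (hS : S ⊆ Finset.range n) : (word n S).count true = S.card := by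
  have hfilter : ((List.range n).filter (· ∈ S)).toFinset = S := by
    ext t
    simpa using @hS t
  have hcard := List.toFinset_card_of_nodup ((List.nodup_range (n := n)).filter (· ∈ S))
  rw [hfilter] at hcard
  rw [hcard, word, List.count, List.countP_map, List.countP_eq_length_filter]
  simp [Function.comp_def]

theorem true_true_infix_word_iff (hS : S ⊆ Finset.range n) :
    [true, true] <:+: word n S ↔ ∃ t ∈ S, t + 1 ∈ S := by
  have hget (t : ℕ) : (word n S)[t]? = some true ↔ t ∈ S := by
    rw [← decide_eq_true_iff (p := t ∈ S), ← getD_word hS, List.getD_eq_getElem?_getD]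
    cases (word n S)[t]? <;> simp
  rw [List.infix_iff_getElem?]
  constructor
  · rintro ⟨t, -, h⟩
    exact ⟨t, (hget t).1 (by simpa using h 0 (by simp)),
      (hget (t + 1)).1 (by simpa [add_comm] using h 1 (by simp))⟩
  · rintro ⟨t, ht, ht'⟩
    refine ⟨t, ?_, fun i hi ↦ ?_⟩
    · have := Finset.mem_range.1 (hS ht')
      simp only [length_word, List.length_cons, List.length_nil]
      omega
    · rcases Nat.le_one_iff_eq_zero_or_eq_one.1 (Nat.lt_succ_iff.1 hi) with rfl | rfl
      · simpa using (hget t).2 ht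
      · simpa [add_comm] using (hget (t + 1)).2 ht'

theorem subset_range_of_mem_sparse (hS : S ∈ sparse k (n + 1)) : S ⊆ Finset.range n :=
  fun t ht ↦ Finset.mem_range.2 (Nat.lt_of_succ_lt_succ (hS.2.2 t ht))

theorem memF_word_iff (hS : S ⊆ Finset.range n) : memF n k (word n S) ↔ S ∈ sparse k (n + 1) := by
  have hlt : ∀ t ∈ S, t + 1 < n + 1 := fun t ht ↦
    Nat.succ_lt_succ (Finset.mem_range.1 (hS ht))
  simp only [memF, sparse, length_word, count_true_word hS, true_true_infix_word_iff hS, not_exists,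
    not_and, Set.mem_ofPred_eq, true_and]
  rw [and_iff_left hlt]

theorem okT_word_iff (hS : S ⊆ Finset.range n) :
    okT (word n S) s j ↔ j < n ∧ Slide S s j := by
  simp only [okT, length_word, getD_word hS, decide_eq_true_eq, decide_eq_false_iff_not, Slide]
  grind

theorem applyT_word (n : ℕ) (S : Finset ℕ) (s j : ℕ) :
    applyT (word n S) s j = word n (insert j (S.erase s)) := by
  refine List.ext_getElem (by simp [applyT]) fun t ht ht' ↦ ?_
  simp only [applyT, word, List.getElem_set, List.getElem_map, List.getElem_range]
  grind

theorem flatten_replicate_false_true (m : ℕ) :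
    (List.replicate m [false, true]).flatten = (List.range (2 * m)).map fun t ↦ decide (Odd t) := by
  induction m with
  | zero => rfl
  | succ m ih => simp [List.replicate_succ', ih, mul_add, List.range_succ, parity_simps]

theorem mem_positions_replicate {t i : ℕ} :
    t ∈ positions (List.replicate k i) ↔ ∃ l < k, t = i + 2 * l := by
  induction k with
  | zero => simp [positions]
  | succ k ih =>
    rw [List.replicate_succ, positions_cons (replicate_mem_box k le_rfl), Finset.mem_insert, ih,
      Nat.exists_lt_succ_right, or_comm]

theorem alphaF_eq_word {i : ℕ} (hk : k ≠ 0) (hi : i + 2 * k ≤ n + 1) :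
    alphaF n k i = word n (positions (List.replicate k i)) := by
  obtain ⟨k, rfl⟩ := Nat.exists_eq_succ_of_ne_zero hk
  obtain ⟨r, rfl⟩ : ∃ r, n = i + 1 + 2 * k + r := Nat.exists_eq_add_of_le (by omega)
  have hr : i + 1 + 2 * k + r + 1 - 2 * (k + 1) - i = r := by omega
  simp only [alphaF, flatten_replicate_false_true, word, mem_positions_replicate, List.range_add,
    List.map_append, List.map_map, Nat.succ_eq_add_one, Nat.add_sub_cancel, hr]
  refine congrArg₂ _ (congrArg₂ _ (congrArg₂ _ ?_ ?_) ?_) ?_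
  · refine (List.eq_replicate_iff.2 ⟨by simp, ?_⟩).symm
    simp only [List.forall_mem_map, List.mem_range, decide_eq_false_iff_not]
    rintro t ht ⟨l, -, h⟩
    omega
  · simp
  · refine List.map_congr_left fun t ht ↦ ?_
    simp only [List.mem_range, Function.comp_apply, decide_eq_decide] at ht ⊢
    constructor
    · rintro ⟨l, rfl⟩
      exact ⟨l + 1, by omega, by omega⟩
    · rintro ⟨l, -, h⟩
      exact ⟨l - 1, by omega⟩
  · refine (List.eq_replicate_iff.2 ⟨by simp, ?_⟩).symm
    simp only [List.forall_mem_map, List.mem_range, Function.comp_apply, decide_eq_false_iff_not]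
    rintro t - ⟨l, hl, h⟩
    omega

end Word

section Encode

variable {n k M : ℕ} {w w' : List ℕ} {b : List Bool} {V : Set (List ℕ)}

/-- The word of length `n` encoded by a partition. -/
def encode (n : ℕ) (w : List ℕ) : List Bool := word n (positions w)

theorem positions_subset_range (hn : n + 1 = M + 2 * k) (hw : w ∈ box k M) :
    positions w ⊆ Finset.range n :=
  subset_range_of_mem_sparse (hn ▸ positions_mem_sparse hw)

theorem encode_injOn (hn : n + 1 = M + 2 * k) : Set.InjOn (encode n) (box k M) :=
  (word_injOn n).comp (positions_injOn k M) fun _ hw ↦ positions_subset_range hn hw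

theorem memF_iff (hn : n + 1 = M + 2 * k) : memF n k b ↔ ∃ w ∈ box k M, encode n w = b := by
  constructor
  · intro hb
    obtain ⟨S, hS, hSb⟩ := exists_word_eq b
    rw [hb.1] at hS hSb
    rw [← hSb, memF_word_iff hS, hn] at hb
    obtain ⟨w, hw, rfl⟩ := exists_positions_eq hb
    exact ⟨w, hw, hSb⟩
  · rintro ⟨w, hw, rfl⟩
    rw [encode, memF_word_iff (positions_subset_range hn hw), hn]
    exact positions_mem_sparse hw

theorem wordMove_encode_iff (hn : n + 1 = M + 2 * k) (hw : w ∈ box k M) (a : ℕ ×ₗ ℕ)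
    (b : List Bool) :
    WordMove (memF n k) a (encode n w) b ↔ ∃ w', Shift k M a w w' ∧ encode n w' = b := by
  have hrange := positions_subset_range hn hw
  simp only [WordMove, encode, okT_word_iff hrange, applyT_word]
  constructor
  · rintro ⟨⟨hlt, hslide⟩, rfl, hmem⟩
    have hrange' : insert (ofLex a).2 ((positions w).erase (ofLex a).1) ⊆ Finset.range n :=
      Finset.insert_subset (Finset.mem_range.2 hlt) ((Finset.erase_subset _ _).trans hrange)
    rw [memF_word_iff hrange', hn] at hmem
    obtain ⟨w', hw', hpos⟩ := exists_positions_eq hmem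
    exact ⟨w', shift_of_slide hw hw' hslide hpos, by rw [hpos]⟩
  · rintro ⟨w', h, rfl⟩
    obtain ⟨hslide, hpos⟩ := h.slide
    have hlt : (ofLex a).2 < n := Finset.mem_range.1 <|
      positions_subset_range hn h.right_mem (hpos ▸ Finset.mem_insert_self _ _)
    exact ⟨⟨hlt, hslide⟩, by rw [hpos], (memF_iff hn).2 ⟨w', h.right_mem, rfl⟩⟩

theorem isGen_encode_iff (hn : n + 1 = M + 2 * k) (hw : w ∈ box k M)
    (hrun : GreedyRun (Shift k M) ({w}, w) (V, w')) (hstuck : Stuck (Shift k M) V w') :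
    IsGen (memF n k) (encode n w) ↔ box k M ⊆ V := by
  have hmove := fun w hw ↦ wordMove_encode_iff hn (w := w) hw
  obtain ⟨hVbox, hw', hrun'⟩ := hrun.map (f := encode n) (encode_injOn hn)
    (fun _ _ _ _ h ↦ h.right_mem) hmove (Set.singleton_subset_iff.2 hw) hw
  rw [Set.image_singleton] at hrun'
  rw [isGen_iff_of_greedyRun ((memF_iff hn).2 ⟨w, hw, rfl⟩) hrun'
    (hstuck.map fun a b' ↦ (hmove w' hw' a b').1),
    ← (encode_injOn hn).image_subset_image_iff subset_rfl hVbox]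
  simp only [memF_iff hn, Set.subset_def, Set.mem_image]

theorem setOf_isGen_eq (hn : n + 1 = M + 2 * k) (hk : k ≠ 0) :
    {b | IsGen (memF n k) b} = alphaF n k '' Set.Iic M := by
  ext b
  constructor
  · intro hb
    obtain ⟨w, hw, rfl⟩ := (memF_iff hn).1 hb.1
    by_cases hconst : ∃ c, w = List.replicate k c
    · obtain ⟨c, rfl⟩ := hconst
      have hc := le_of_replicate_mem_box hk hw
      exact ⟨c, hc, alphaF_eq_word hk (by omega)⟩
    · obtain ⟨V, hrun, hstuck, hzero⟩ :=
        exists_greedyRun_of_ne_replicate hw (not_exists.1 hconst)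
      exact (hzero <| (isGen_encode_iff hn hw hrun hstuck).1 hb <|
        replicate_mem_box k (Nat.zero_le M)).elim
  · rintro ⟨c, hc, rfl⟩
    have hcM : c ≤ M := hc
    rw [alphaF_eq_word hk (by omega)]
    exact (isGen_encode_iff hn (replicate_mem_box k hc) (exhaustsBoxes k M c hc)
      (stuck_of_box_subset subset_rfl)).2 subset_rfl

theorem alphaF_injOn (hn : n + 1 = M + 2 * k) (hk : k ≠ 0) :
    Set.InjOn (alphaF n k) (Set.Iic M) := by
  intro c hc d hd h
  have hcM : c ≤ M := hc
  have hdM : d ≤ M := hd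
  rw [alphaF_eq_word hk (by omega), alphaF_eq_word hk (by omega)] at h
  exact List.replicate_right_injective hk <|
    encode_injOn hn (replicate_mem_box k hc) (replicate_mem_box k hd) h

end Encode

end GenF

theorem genF_eq (n k : ℕ) (hk : 1 ≤ k) (hn : 2 * k ≤ n + 1) :
    {α : List Bool | IsGen (memF n k) α} =
      {w : List Bool | ∃ i ≤ n + 1 - 2 * k, w = alphaF n k i} ∧
    Nat.card {α : List Bool | IsGen (memF n k) α} = n + 2 - 2 * k := by
  obtain ⟨M, hM⟩ : ∃ M, n + 1 = M + 2 * k := Nat.exists_eq_add_of_le' hn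
  have hk0 : k ≠ 0 := Nat.one_le_iff_ne_zero.1 hk
  have hgen := GenF.setOf_isGen_eq hM hk0
  have hsub : n + 1 - 2 * k = M := by omega
  constructor
  · rw [hgen, hsub]
    ext b
    simp only [Set.mem_image, Set.mem_Iic, Set.mem_ofPred_eq, eq_comm]
  · rw [hgen, Nat.card_image_of_injOn (GenF.alphaF_injOn hM hk0),
      Nat.card_coe_set_eq, Set.ncard_Iic_nat]
    omega
end

section
/- For n ≥ 2k-1 and any α in F_n(2,k), the greedy homogeneous-transposition list F(α) is suffix partitioned: words sharing a common suffix occupy consecutive positions in the list. -/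
/-- Words sharing a common suffix occupy consecutive positions in the list. -/
def suffixPartitioned (L : List (List Bool)) : Prop :=
  ∀ s : List Bool, ∀ i j k : ℕ, i ≤ j → j ≤ k → k < L.length →
    s <:+ L.getD i [] → s <:+ L.getD k [] → s <:+ L.getD j []

/-!
Record a word by the positions of its ones, rightmost first. Since moves of ones further to the left
come first, the algorithm keeps the rightmost one in place while it runs on the remaining ones, and
moves it only when that run is stuck. By induction on the number of ones, such a run ends with the
ones packed to the right, unless it starts like that. It follows that the rightmost one visits each
position during at most one block of consecutive words, and that its position first decreases and
then increases from block to block. Hence the words with the rightmost one at a given position are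
consecutive, and so are the words with no ones from a given position on; longer suffixes are handled
by the induction.
-/

namespace GreedyGray

open Relation

section GreedyRun

variable {σ τ : Type*}

/-- One step of the greedy algorithm for the labelled move relation `mv`, acting on histories: the
words listed so far, most recent first. Labels `(i, j)` are compared lexicographically. -/
inductive GreedyStep (mv : ℕ → ℕ → σ → σ → Prop) : List σ → List σ → Prop
  | intro {x y : σ} {T : List σ} {i j : ℕ} : mv i j x y → y ∉ x :: T →
      (∀ i' j' y', mv i' j' x y' → y' ∉ x :: T → i < i' ∨ i = i' ∧ j ≤ j') →
      GreedyStep mv (x :: T) (y :: x :: T)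

/-- The greedy algorithm started at `x` terminates at `e` with history `K`. -/
structure IsGreedyRun (mv : ℕ → ℕ → σ → σ → Prop) (x : σ) (K : List σ) (e : σ) : Prop where
  reach : ReflTransGen (GreedyStep mv) [x] K
  head : K.head? = some e
  stuck : ∀ i j y, mv i j e y → y ∈ K

variable {mv : ℕ → ℕ → σ → σ → Prop} {x e : σ} {K : List σ}

theorem GreedyStep.rightUnique (hdet : ∀ i j, Relator.RightUnique (mv i j)) :
    Relator.RightUnique (GreedyStep mv) := by
  rintro _ _ _ (@⟨x, y, T, i, j, hxy, hy, hmin⟩) (@⟨_, z, _, i', j', hxz, hz, hmin'⟩)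
  have hle := hmin _ _ _ hxz hz
  have hge := hmin' _ _ _ hxy hy
  obtain ⟨rfl, rfl⟩ : i = i' ∧ j = j' := by omega
  rw [hdet _ _ hxy hxz]

theorem IsGreedyRun.not_step (h : IsGreedyRun mv x K e) (K' : List σ) : ¬ GreedyStep mv K K' := by
  rintro ⟨hxy, hy, -⟩
  obtain rfl := Option.some.inj h.head
  exact hy (h.stuck _ _ _ hxy)

theorem IsGreedyRun.unique (hdet : ∀ i j, Relator.RightUnique (mv i j)) {e' : σ} {K' : List σ}
    (h : IsGreedyRun mv x K e) (h' : IsGreedyRun mv x K' e') : K = K' := by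
  rcases ReflTransGen.total_of_right_unique (GreedyStep.rightUnique hdet) h.reach h'.reach with
    hKK' | hK'K
  · exact (hKK'.cases_head.resolve_right fun ⟨_, hstep, _⟩ => h.not_step _ hstep)
  · exact (hK'K.cases_head.resolve_right fun ⟨_, hstep, _⟩ => h'.not_step _ hstep).symm

theorem mem_of_reach {K₀ : List σ} (h : ReflTransGen (GreedyStep mv) K₀ K) (hx : x ∈ K₀) :
    x ∈ K := by
  induction h with
  | refl => exact hx
  | tail _ hstep ih => cases hstep; exact List.mem_cons_of_mem _ ih

theorem IsGreedyRun.start_mem (h : IsGreedyRun mv x K e) : x ∈ K :=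
  mem_of_reach h.reach (List.mem_singleton_self x)

theorem IsGreedyRun.end_mem (h : IsGreedyRun mv x K e) : e ∈ K :=
  List.mem_of_head? h.head

section Map

variable {mv' : ℕ → ℕ → τ → τ → Prop} {f : σ → τ} {S : Set σ}

theorem forall_mem_of_reach (hS : ∀ x ∈ S, ∀ i j y, mv i j x y → y ∈ S) {K₀ : List σ}
    (h : ReflTransGen (GreedyStep mv) K₀ K) (h₀ : ∀ y ∈ K₀, y ∈ S) : ∀ y ∈ K, y ∈ S := by
  induction h with
  | refl => exact h₀
  | tail _ hstep ih =>
    cases hstep with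
    | intro hmv => exact List.forall_mem_cons.2 ⟨hS _ (ih _ List.mem_cons_self) _ _ _ hmv, ih⟩

theorem mem_map_iff_of_injOn (hf : Set.InjOn f S) (hK : ∀ y ∈ K, y ∈ S) (hx : x ∈ S) :
    f x ∈ K.map f ↔ x ∈ K := by
  refine ⟨fun h => ?_, List.mem_map_of_mem⟩
  obtain ⟨y, hy, hyx⟩ := List.mem_map.1 h
  rwa [← hf (hK y hy) hx hyx]

variable (hf : Set.InjOn f S) (hS : ∀ x ∈ S, ∀ i j y, mv i j x y → y ∈ S)
  (hmv : ∀ x ∈ S, ∀ i j w, mv' i j (f x) w ↔ ∃ y, mv i j x y ∧ f y = w)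

include hf hS hmv

theorem GreedyStep.map {K' : List σ} (h : GreedyStep mv K K') (hK : ∀ y ∈ K, y ∈ S) :
    GreedyStep mv' (K.map f) (K'.map f) := by
  obtain ⟨hxy, hy, hmin⟩ := h
  have hx := hK _ List.mem_cons_self
  refine .intro ((hmv _ hx _ _ _).2 ⟨_, hxy, rfl⟩) ?_ fun i' j' w hw hwK => ?_
  · rwa [← List.map_cons, mem_map_iff_of_injOn hf hK (hS _ hx _ _ _ hxy)]
  · obtain ⟨z, hxz, rfl⟩ := (hmv _ hx _ _ _).1 hw
    exact hmin _ _ _ hxz fun hz => hwK (List.mem_map_of_mem (f := f) hz)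

theorem IsGreedyRun.map (h : IsGreedyRun mv x K e) (hx : x ∈ S) :
    IsGreedyRun mv' (f x) (K.map f) (f e) := by
  have hmem {K' : List σ} (hK' : ReflTransGen (GreedyStep mv) [x] K') : ∀ y ∈ K', y ∈ S :=
    forall_mem_of_reach hS hK' (by simpa using hx)
  refine ⟨?_, by simp [h.head], fun i j w hw => ?_⟩
  · have hreach := h.reach
    clear h
    induction hreach with
    | refl => exact .refl
    | tail hreach hstep ih => exact ih.tail (hstep.map hf hS hmv (hmem hreach))
  · obtain ⟨y, hey, rfl⟩ := (hmv e (hmem h.reach e h.end_mem) _ _ _).1 hw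
    exact List.mem_map_of_mem (h.stuck _ _ _ hey)

end Map

end GreedyRun

/-- The moves of the greedy algorithm on words satisfying `P`. -/
def WordMove (P : List Bool → Prop) (i j : ℕ) (w w' : List Bool) : Prop :=
  okT w i j ∧ w' = applyT w i j ∧ P w'

theorem WordMove.rightUnique (P : List Bool → Prop) (i j : ℕ) :
    Relator.RightUnique (WordMove P i j) := by
  rintro w _ _ ⟨-, rfl, -⟩ ⟨-, rfl, -⟩
  rfl

theorem reverse_take_succ {α : Type*} {l : List α} {m : ℕ} (hm : m < l.length) :
    (l.take (m + 1)).reverse = l[m] :: (l.take m).reverse := by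
  rw [List.take_add_one, List.getElem?_eq_getElem hm, Option.toList_some, List.reverse_append,
    List.reverse_singleton, List.singleton_append]

theorem isGreedyRun_of_isGreedyList {P : List Bool → Prop} {α : List Bool} {L : List (List Bool)}
    (hL : IsGreedyList P α L) : ∃ ω, IsGreedyRun (WordMove P) α L.reverse ω := by
  obtain ⟨hα, hnodup, hP, hstep, hlast⟩ := hL
  have hpos : 0 < L.length := List.length_pos_of_mem (List.mem_of_head? hα)
  have hreach (m : ℕ) (hm : m < L.length) :
      ReflTransGen (GreedyStep (WordMove P)) [α] (L.take (m + 1)).reverse := by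
    induction m with
    | zero =>
      have hzero : L[0] = α := by simpa [List.head?_eq_getElem?, hpos] using hα
      rw [reverse_take_succ hm, List.take_zero, hzero]
      exact .refl
    | succ m ih =>
      refine (ih (by omega)).tail ?_
      obtain ⟨i, j, hok, happ, hmin⟩ := hstep m hm
      rw [List.getD_eq_getElem _ _ hm] at happ
      rw [List.getD_eq_getElem _ _ (by omega)] at hok happ hmin
      have hmem (w : List Bool) : w ∈ L.take (m + 1) ↔ w ∈ L[m] :: (L.take m).reverse := by
        rw [← reverse_take_succ (by omega), List.mem_reverse]
      rw [reverse_take_succ hm, reverse_take_succ (by omega)]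
      refine .intro ⟨hok, happ, hP _ (List.getElem_mem hm)⟩ ?_ ?_
      · rw [← hmem, List.mem_take_iff_getElem]
        rintro ⟨l, hl, hlm⟩
        have := hnodup.getElem_inj_iff.1 hlm
        omega
      · rintro i' j' w ⟨hok', rfl, hPw⟩ hw
        exact hmin i' j' hok' hPw (by rwa [hmem])
  refine ⟨L.getD (L.length - 1) [], ?_, ?_, ?_⟩
  · simpa [Nat.sub_add_cancel hpos] using hreach (L.length - 1) (by omega)
  · rw [List.head?_reverse, List.getLast?_eq_getElem?, List.getD_eq_getElem _ _ (by omega),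
      List.getElem?_eq_getElem]
  · rintro i j w ⟨hok, rfl, hPw⟩
    exact List.mem_reverse.2 (hlast i j hok hPw)

/-- `x` lists, from right to left, the positions of the ones of a word without adjacent ones, all of
them at most `N - 2`. The bound is the position of the next one to the right, so that a word of
length `n` has bound `n + 1`, and the ones to the left of a one at `c` have bound `c`. -/
def Spaced (N : ℕ) (x : List ℕ) : Prop :=
  (N :: x).Pairwise fun a b => b + 2 ≤ a

section Spaced

variable {N c p v : ℕ} {x y γ : List ℕ}

theorem spaced_nil : Spaced N [] :=
  List.pairwise_singleton _ _

theorem Spaced.add_two_le (h : Spaced N x) (hp : p ∈ x) : p + 2 ≤ N :=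
  List.rel_of_pairwise_cons h hp

theorem Spaced.mono {N' : ℕ} (h : Spaced N x) (hN : N ≤ N') : Spaced N' x :=
  List.pairwise_cons.2 ⟨fun _ hp => (h.add_two_le hp).trans hN, (List.pairwise_cons.1 h).2⟩

theorem spaced_cons : Spaced N (c :: γ) ↔ c + 2 ≤ N ∧ Spaced c γ := by
  refine ⟨fun h => ⟨h.add_two_le List.mem_cons_self, (List.pairwise_cons.1 h).2⟩, ?_⟩
  rintro ⟨hc, hγ⟩
  refine List.pairwise_cons.2 ⟨List.forall_mem_cons.2 ⟨hc, fun p hp => ?_⟩, hγ⟩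
  have := hγ.add_two_le hp
  omega

theorem Spaced.two_mul_length_le (h : Spaced N x) : 2 * x.length ≤ N := by
  induction x generalizing N with
  | nil => simp
  | cons c γ ih =>
    obtain ⟨hc, hγ⟩ := spaced_cons.1 h
    have := ih hγ
    rw [List.length_cons]
    omega

theorem Spaced.pairwise_gt (h : Spaced N x) : x.Pairwise (· > ·) :=
  (List.pairwise_cons.1 h).2.imp fun h => by omega

theorem Spaced.add_two_le_of_lt {q : ℕ} (h : Spaced N x) (hp : p ∈ x) (hq : q ∈ x) (hpq : p < q) :
    p + 2 ≤ q := by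
  induction x generalizing N with
  | nil => simp at hp
  | cons c γ ih =>
    obtain ⟨-, hγ⟩ := spaced_cons.1 h
    rcases List.mem_cons.1 hp with hpc | hp <;>
      rcases List.mem_cons.1 hq with hqc | hq
    · omega
    · have := hγ.add_two_le hq
      omega
    · simpa only [hqc] using hγ.add_two_le hp
    · exact ih hγ hp hq

theorem Spaced.ext {N' : ℕ} (hx : Spaced N x) (hy : Spaced N' y) (h : ∀ p, p ∈ x ↔ p ∈ y) :
    x = y :=
  hx.pairwise_gt.eq_of_mem_iff hy.pairwise_gt h

/-- The ones at positions at least `q`; two words agree from position `q` on if and only if these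
parts of their tuples agree. -/
def above (q : ℕ) (x : List ℕ) : List ℕ :=
  x.takeWhile (q ≤ ·)

theorem Spaced.above (hx : Spaced N x) (q : ℕ) : Spaced N (above q x) :=
  hx.sublist ((List.takeWhile_sublist _).cons_cons N)

theorem mem_above {q : ℕ} (hx : Spaced N x) : p ∈ above q x ↔ q ≤ p ∧ p ∈ x := by
  induction x generalizing N with
  | nil => simp [above]
  | cons c γ ih =>
    obtain ⟨-, hγ⟩ := spaced_cons.1 hx
    by_cases hq : q ≤ c
    · have hcons : above q (c :: γ) = c :: above q γ := List.takeWhile_cons_of_pos (by simpa)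
      rw [hcons, List.mem_cons, ih hγ, List.mem_cons]
      constructor
      · rintro (rfl | ⟨hp, hmem⟩)
        exacts [⟨hq, .inl rfl⟩, ⟨hp, .inr hmem⟩]
      · rintro ⟨hp, rfl | hmem⟩
        exacts [.inl rfl, .inr ⟨hp, hmem⟩]
    · have hnil : above q (c :: γ) = [] := List.takeWhile_cons_of_neg (by simpa using hq)
      simp only [hnil, List.not_mem_nil, List.mem_cons, false_iff, not_and]
      rintro hp (rfl | hmem)
      · exact hq hp
      · have := hγ.add_two_le hmem
        omega

end Spaced

/-- `Move N i j x y`: moving the one at `i` to `j` turns the tuple `x` into `y`, without passing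
over another one, both tuples being spaced below `N`. -/
inductive Move : ℕ → ℕ → ℕ → List ℕ → List ℕ → Prop
  | head {N c v : ℕ} {γ : List ℕ} :
      Spaced N (c :: γ) → Spaced N (v :: γ) → v ≠ c → Move N c v (c :: γ) (v :: γ)
  | tail {N c i j : ℕ} {γ δ : List ℕ} :
      c + 2 ≤ N → Move c i j γ δ → Move N i j (c :: γ) (c :: δ)

section Move

variable {N i j : ℕ} {x y : List ℕ}

theorem Move.spaced_left (h : Move N i j x y) : Spaced N x := by
  induction h with
  | head hc => exact hc
  | tail hc _ ih => exact spaced_cons.2 ⟨hc, ih⟩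

theorem Move.spaced_right (h : Move N i j x y) : Spaced N y := by
  induction h with
  | head _ hv => exact hv
  | tail hc _ ih => exact spaced_cons.2 ⟨hc, ih⟩

theorem Move.length_eq (h : Move N i j x y) : y.length = x.length := by
  induction h with
  | head => rfl
  | tail _ _ ih => simp only [List.length_cons, ih]

theorem Move.mem_left (h : Move N i j x y) : i ∈ x := by
  induction h with
  | head => exact List.mem_cons_self
  | tail _ _ ih => exact List.mem_cons_of_mem _ ih

theorem Move.mem_right_iff (h : Move N i j x y) (p : ℕ) : p ∈ y ↔ p = j ∨ p ≠ i ∧ p ∈ x := by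
  induction h with
  | head hc =>
    have hp := (spaced_cons.1 hc).2.add_two_le (p := p)
    grind
  | tail _ hmove ih =>
    have hi := hmove.spaced_left.add_two_le hmove.mem_left
    grind

theorem Move.notMem_left (h : Move N i j x y) (t : ℕ)
    (ht : t = j ∨ min i j < t ∧ t < max i j) : t ∉ x := by
  induction h with
  | head hc hv =>
    have hc := (spaced_cons.1 hc).2.add_two_le (p := t)
    have hv := (spaced_cons.1 hv).2.add_two_le (p := t)
    grind
  | tail _ hmove ih =>
    have hi := hmove.spaced_left.add_two_le hmove.mem_left
    have hj := hmove.spaced_right.add_two_le ((hmove.mem_right_iff _).2 (.inl rfl))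
    grind

theorem move_iff : Move N i j x y ↔ Spaced N x ∧ Spaced N y ∧ i ∈ x ∧ j ∉ x ∧
    (∀ t, min i j < t → t < max i j → t ∉ x) ∧ ∀ p, p ∈ y ↔ p = j ∨ p ≠ i ∧ p ∈ x := by
  refine ⟨fun h => ⟨h.spaced_left, h.spaced_right, h.mem_left, h.notMem_left j (.inl rfl),
    fun t hl hr => h.notMem_left t (.inr ⟨hl, hr⟩), h.mem_right_iff⟩, ?_⟩
  rintro ⟨hx, hy, hi, hj, hbetween, hmem⟩
  induction x generalizing N y with
  | nil => simp at hi
  | cons c γ ih =>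
    obtain ⟨hc, hγ⟩ := spaced_cons.1 hx
    have hlt (g : ℕ) (hg : g ∈ γ) : g + 2 ≤ c := hγ.add_two_le hg
    have hjy : j ∈ y := (hmem j).2 (.inl rfl)
    by_cases hic : i = c
    · subst hic
      have hvγ : Spaced j γ := by
        refine List.pairwise_cons.2 ⟨fun g hg => ?_, (List.pairwise_cons.1 hγ).2⟩
        have := hlt g hg
        refine hy.add_two_le_of_lt ((hmem g).2 (by grind)) hjy ?_
        grind
      have hv : Spaced N (j :: γ) := spaced_cons.2 ⟨hy.add_two_le hjy, hvγ⟩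
      obtain rfl : y = j :: γ := hy.ext hv fun p => by grind
      exact .head hx hv (by grind)
    · have hjc : j < c := by
        by_contra hcj
        have := hlt i (by grind)
        exact hbetween c (by grind) (by grind) List.mem_cons_self
      obtain ⟨d, δ, rfl⟩ := List.exists_cons_of_ne_nil (List.ne_nil_of_mem hjy)
      obtain ⟨-, hδ⟩ := spaced_cons.1 hy
      have hδlt (g : ℕ) (hg : g ∈ δ) : g + 2 ≤ d := hδ.add_two_le hg
      obtain rfl : d = c := by
        have := hmem d
        have := hmem c
        grind
      exact .tail hc (ih hγ hδ (by grind) (by grind) (by grind) fun p => by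
        have := hmem p
        grind)

end Move

/-- The word of length `n` with ones exactly at the positions in `x`. -/
def toWord (n : ℕ) (x : List ℕ) : List Bool :=
  (List.range n).map fun p => decide (p ∈ x)

section toWord

variable {n k i j : ℕ} {x y : List ℕ} {w : List Bool}

theorem length_toWord : (toWord n x).length = n := by
  simp only [toWord, List.length_map, List.length_range]

theorem getD_toWord (hx : Spaced (n + 1) x) (p : ℕ) :
    (toWord n x).getD p false = decide (p ∈ x) := by
  by_cases hp : p < n
  · rw [List.getD_eq_getElem _ _ (by rwa [length_toWord])]
    simp only [toWord, List.getElem_map, List.getElem_range]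
  · rw [List.getD_eq_default _ _ (by rw [length_toWord]; omega), eq_comm, decide_eq_false_iff_not]
    intro hmem
    have := hx.add_two_le hmem
    omega

theorem eq_toWord_iff (hx : Spaced (n + 1) x) :
    w = toWord n x ↔ w.length = n ∧ ∀ p, p ∈ x ↔ w.getD p false = true := by
  constructor
  · rintro rfl
    simp only [length_toWord, getD_toWord hx, decide_eq_true_eq, implies_true, and_self]
  · rintro ⟨hlen, hmem⟩
    refine List.ext_getElem (hlen.trans length_toWord.symm) fun p hw hp => ?_
    rw [← List.getD_eq_getElem w false, ← List.getD_eq_getElem _ false, getD_toWord hx,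
      Bool.eq_iff_iff, decide_eq_true_eq, hmem]

theorem count_toWord (hx : Spaced (n + 1) x) : (toWord n x).count true = x.length := by
  have hnodup : x.Nodup := hx.pairwise_gt.imp fun h => h.ne'
  have hperm : ((List.range n).filter (fun p => decide (p ∈ x))).Perm x := by
    rw [List.perm_ext_iff_of_nodup (List.nodup_range.filter _) hnodup]
    intro p
    simp only [List.mem_filter, List.mem_range, decide_eq_true_eq, and_iff_right_iff_imp]
    intro hp
    have := hx.add_two_le hp
    omega
  rw [← hperm.length_eq, toWord, List.count, List.countP_map, List.countP_eq_length_filter]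
  simp only [Function.comp_def, beq_true]

theorem infix_true_true_iff :
    [true, true] <:+: w ↔ ∃ p, w.getD p false = true ∧ w.getD (p + 1) false = true := by
  have hgetD (p : ℕ) : w.getD p false = true ↔ w[p]? = some true := by
    rw [List.getD_eq_getElem?_getD]
    cases w[p]? <;> simp
  simp only [List.infix_iff_getElem?, hgetD]
  refine exists_congr fun p => ⟨fun ⟨_, h⟩ => ?_, fun ⟨hp, hp'⟩ => ⟨?_, ?_⟩⟩
  · exact ⟨by simpa using h 0 (by simp), by simpa [add_comm] using h 1 (by simp)⟩
  · have := (List.getElem?_eq_some_iff.1 hp').1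
    simp only [List.length_cons, List.length_nil]
    omega
  · rintro (_ | _ | i) hi
    · simpa using hp
    · simpa [add_comm] using hp'
    · simp at hi

theorem memF_toWord (hx : Spaced (n + 1) x) : memF n x.length (toWord n x) := by
  refine ⟨length_toWord, count_toWord hx, ?_⟩
  rw [infix_true_true_iff]
  rintro ⟨p, hp, hp'⟩
  rw [getD_toWord hx, decide_eq_true_eq] at hp hp'
  have := hx.add_two_le_of_lt hp hp' (by omega)
  omega

theorem exists_eq_toWord (hw : memF n k w) :
    ∃ x, Spaced (n + 1) x ∧ x.length = k ∧ w = toWord n x := by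
  obtain ⟨hlen, hcount, hadj⟩ := hw
  rw [infix_true_true_iff] at hadj
  let x := ((List.range n).filter (fun p => w.getD p false)).reverse
  have hmem (p : ℕ) : p ∈ x ↔ w.getD p false = true := by
    simp only [x, List.mem_reverse, List.mem_filter, List.mem_range, and_iff_right_iff_imp]
    intro hp
    by_contra hn
    rw [List.getD_eq_default _ _ (by omega)] at hp
    exact Bool.false_ne_true hp
  have hgt : x.Pairwise (· > ·) := List.pairwise_reverse.2 (List.pairwise_lt_range.filter _)
  have hx : Spaced (n + 1) x := by
    refine List.pairwise_cons.2 ⟨fun p hp => ?_, hgt.imp_of_mem fun {a b} ha hb hab => ?_⟩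
    · have : p < n := by
        simp only [x, List.mem_reverse, List.mem_filter, List.mem_range] at hp
        exact hp.1
      omega
    · by_contra hlt
      obtain rfl : a = b + 1 := by omega
      exact hadj ⟨b, (hmem _).1 hb, (hmem _).1 ha⟩
  have hwx : w = toWord n x := (eq_toWord_iff hx).2 ⟨hlen, hmem⟩
  exact ⟨x, hx, by rw [← count_toWord hx, ← hwx, hcount], hwx⟩

theorem length_applyT : (applyT w i j).length = w.length := by
  simp only [applyT, List.length_set]

theorem getD_applyT (hj : j < w.length) (p : ℕ) : (applyT w i j).getD p false = true ↔
    p = j ∨ p ≠ i ∧ w.getD p false = true := by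
  simp only [applyT, List.getD_eq_getElem?_getD, List.getElem?_set]
  grind

theorem okT_toWord_iff (hx : Spaced (n + 1) x) : okT (toWord n x) i j ↔
    j < n ∧ i ∈ x ∧ j ∉ x ∧ ∀ t, min i j < t → t < max i j → t ∉ x := by
  simp only [okT, getD_toWord hx, length_toWord, decide_eq_true_eq, decide_eq_false_iff_not]
  refine ⟨fun h => h.2, fun h => ⟨?_, h⟩⟩
  have := hx.add_two_le h.2.1
  omega

theorem applyT_toWord_eq_iff (hx : Spaced (n + 1) x) (hy : Spaced (n + 1) y) (hj : j < n) :
    applyT (toWord n x) i j = toWord n y ↔ ∀ p, p ∈ y ↔ p = j ∨ p ≠ i ∧ p ∈ x := by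
  simp only [eq_toWord_iff hy, length_applyT, length_toWord, true_and,
    getD_applyT (w := toWord n x) (by rwa [length_toWord]), getD_toWord hx, decide_eq_true_eq]

theorem wordMove_toWord_iff (hx : Spaced (n + 1) x) :
    WordMove (memF n x.length) i j (toWord n x) w ↔ ∃ y, Move (n + 1) i j x y ∧ toWord n y = w := by
  constructor
  · rintro ⟨hok, happ, hw⟩
    obtain ⟨y, hy, -, rfl⟩ := exists_eq_toWord hw
    obtain ⟨hj, hmove⟩ := (okT_toWord_iff hx).1 hok
    have hmem := (applyT_toWord_eq_iff hx hy hj).1 happ.symm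
    exact ⟨y, move_iff.2 ⟨hx, hy, hmove.1, hmove.2.1, hmove.2.2, hmem⟩, rfl⟩
  · rintro ⟨y, hmove, rfl⟩
    obtain ⟨-, hy, hi, hj, hbetween, hmem⟩ := move_iff.1 hmove
    have hjn : j < n := by
      have := hy.add_two_le ((hmem j).2 (.inl rfl))
      omega
    exact ⟨(okT_toWord_iff hx).2 ⟨hjn, hi, hj, hbetween⟩,
      ((applyT_toWord_eq_iff hx hy hjn).2 hmem).symm, hmove.length_eq ▸ memF_toWord hy⟩

theorem drop_toWord_eq_iff (hx : Spaced (n + 1) x) (hy : Spaced (n + 1) y) (q : ℕ) :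
    (toWord n x).drop q = (toWord n y).drop q ↔ above q x = above q y := by
  have hdrop : (toWord n x).drop q = (toWord n y).drop q ↔ ∀ p, q ≤ p → (p ∈ x ↔ p ∈ y) := by
    simp only [toWord, ← List.map_drop, List.range_eq_range', List.drop_range', List.map_inj_left,
      List.mem_range'_1, decide_eq_decide]
    refine ⟨fun h p hp => ?_, fun h p hp => h p (by omega)⟩
    by_cases hpn : p < n
    · exact h p (by omega)
    · have hnotMem {z : List ℕ} (hz : Spaced (n + 1) z) : p ∉ z := fun hmem => by
        have := hz.add_two_le hmem
        omega
      exact iff_of_false (hnotMem hx) (hnotMem hy)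
  rw [hdrop]
  refine ⟨fun h => (hx.above q).ext (hy.above q) fun p => ?_, fun h p hp => ?_⟩
  · rw [mem_above hx, mem_above hy, and_congr_right (h p)]
  · simpa only [mem_above hx, mem_above hy, hp, true_and] using
      Iff.of_eq (congrArg (p ∈ ·) h)

theorem toWord_injOn : Set.InjOn (toWord n) {x | Spaced (n + 1) x} := by
  intro x hx y hy hxy
  refine hx.ext hy fun p => ?_
  rw [((eq_toWord_iff hx).1 rfl).2 p, hxy, ← ((eq_toWord_iff hy).1 rfl).2 p]

end toWord

/-- Words that agree from some position on occupy consecutive places in `K`. -/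
def Contiguous (K : List (List ℕ)) : Prop :=
  K.Triplewise fun a b d => ∀ q, above q a = above q d → above q b = above q a

/-- The position of the rightmost one, and `0` for the zero word. -/
def rightmost (y : List ℕ) : ℕ :=
  y.headD 0

/-- The rightmost ones of the history `K`, which has the newest word first, never move beyond `v`
and to the right of where they have been before. This is what allows words whose rightmost one is
at `v` to be listed next without destroying contiguity. -/
def Valley (v : ℕ) (K : List (List ℕ)) : Prop :=
  K.Pairwise fun b d => rightmost b ≤ max v (rightmost d)

section Contiguous

variable {v w q : ℕ} {y : List ℕ} {H K : List (List ℕ)}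

theorem rightmost_cons (v : ℕ) (y : List ℕ) : rightmost (v :: y) = v :=
  rfl

theorem above_cons (q v : ℕ) (y : List ℕ) :
    above q (v :: y) = if q ≤ v then v :: above q y else [] := by
  simp only [above, List.takeWhile_cons, decide_eq_true_eq]

theorem above_eq_nil_iff (hq : 0 < q) : above q y = [] ↔ rightmost y < q := by
  cases y with
  | nil => simpa [above, rightmost] using hq
  | cons v y => simp [above_cons, rightmost_cons]

theorem above_cons_eq_iff (hy : rightmost y ≠ v) {x : List ℕ} :
    above q (v :: x) = above q y ↔ v < q ∧ rightmost y < q := by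
  by_cases hv : v < q
  · rw [above_cons, if_neg (by omega), eq_comm, above_eq_nil_iff (by omega)]
    simp only [hv, true_and]
  · simp only [above_cons, if_pos (not_lt.1 hv), hv, false_and, iff_false]
    intro h
    cases y with
    | nil => simp [above] at h
    | cons u y =>
      rw [above_cons] at h
      split_ifs at h
      exact hy (List.cons.inj h).1.symm

theorem Valley.mono (h : Valley v K) (hvw : v ≤ w) : Valley w K :=
  h.imp fun h => h.trans (max_le_max_right _ hvw)

theorem valley_of_rightmost_le (h : ∀ y ∈ K, rightmost y ≤ v) : Valley v K :=
  List.pairwise_of_forall_mem_list fun b hb _ _ => (h b hb).trans (le_max_left _ _)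

theorem Valley.of_le_rightmost (h : Valley v K) (hK : ∀ y ∈ K, v ≤ rightmost y) : Valley w K :=
  h.imp_of_mem fun _ hd hbd => (max_eq_right (hK _ hd) ▸ hbd).trans (le_max_right _ _)

theorem Valley.map_cons_append (h : Valley v K) (H : List (List ℕ)) :
    Valley v (H.map (v :: ·) ++ K) := by
  refine List.pairwise_append.2 ⟨?_, h, ?_⟩
  · exact List.pairwise_map.2 (List.pairwise_of_forall fun _ _ => le_max_left _ _)
  · rintro _ hb d -
    obtain ⟨b, -, rfl⟩ := List.mem_map.1 hb
    exact le_max_left _ _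

theorem Contiguous.map_cons_append (hH : Contiguous H) (hK : Contiguous K)
    (hfresh : ∀ y ∈ K, rightmost y ≠ v) (hvalley : Valley v K) :
    Contiguous (H.map (v :: ·) ++ K) := by
  refine List.triplewise_append.2 ⟨hH.map fun {a b d} habd q => ?_, hK, ?_, ?_⟩
  · simp only [above_cons]
    split_ifs
    · simpa using habd q
    · simp
  · intro _ ha
    obtain ⟨a, -, rfl⟩ := List.mem_map.1 ha
    refine hvalley.imp_of_mem fun {b d} _ hd hbd q hq => ?_
    rw [above_cons_eq_iff (hfresh d hd)] at hq
    rw [above_cons, if_neg (by omega), above_eq_nil_iff (by omega)]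
    omega
  · intro d hd
    refine List.pairwise_map.2 (List.pairwise_of_forall fun a b q hq => ?_)
    rw [above_cons_eq_iff (hfresh d hd)] at hq
    simp only [above_cons, if_neg (not_le.2 hq.1)]

end Contiguous

/-- The word with `t` ones pushed as far as possible to the right below the bound `N`. -/
def packed : ℕ → ℕ → List ℕ
  | _, 0 => []
  | N, t + 1 => (N - 2) :: packed (N - 2) t

/-- The last word listed by the greedy algorithm started at `packed N t`. -/
def exitWord (N t : ℕ) : List ℕ :=
  if Even t ∨ N = 2 * t then packed (2 * t) t else packed (N - 1) t

section packed

variable {N M t : ℕ}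

theorem length_packed (N t : ℕ) : (packed N t).length = t := by
  induction t generalizing N with
  | zero => rfl
  | succ t ih => rw [packed, List.length_cons, ih]

theorem spaced_packed (h : 2 * t ≤ N) : Spaced N (packed N t) := by
  induction t generalizing N with
  | zero => exact spaced_nil
  | succ t ih => exact spaced_cons.2 ⟨by omega, ih (by omega)⟩

theorem le_of_spaced_packed (h : Spaced M (packed N t)) (ht : t ≠ 0) : N ≤ M := by
  obtain ⟨t, rfl⟩ := Nat.exists_eq_succ_of_ne_zero ht
  have := (spaced_cons.1 h).1
  omega

theorem packed_ne_packed (hN : 2 * t ≤ N) (hNM : N < M) (ht : t ≠ 0) : packed N t ≠ packed M t := by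
  obtain ⟨t, rfl⟩ := Nat.exists_eq_succ_of_ne_zero ht
  intro h
  have := (List.cons.inj h).1
  omega

theorem exitWord_of_even (ht : Even t) : exitWord N t = packed (2 * t) t :=
  if_pos (.inl ht)

theorem exitWord_two_mul (t : ℕ) : exitWord (2 * t) t = packed (2 * t) t :=
  if_pos (.inr rfl)

theorem exitWord_of_odd (ht : ¬ Even t) (hN : N ≠ 2 * t) : exitWord N t = packed (N - 1) t :=
  if_neg (not_or.2 ⟨ht, hN⟩)

end packed

/-- The greedy algorithm on the tuples spaced below `N`, started at `γ`, terminates at `e` with the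
contiguous history `K`. -/
structure Sweep (N : ℕ) (γ : List ℕ) (K : List (List ℕ)) (e : List ℕ) : Prop
    extends IsGreedyRun (Move N) γ K e where
  contiguous : Contiguous K

/-- The greedy algorithm started at `x` has reached `c :: e` with the contiguous history `K`, and
only moves of the rightmost one, the one at `c`, can lead to new words. -/
structure Settled (N : ℕ) (x : List ℕ) (K : List (List ℕ)) (c : ℕ) (e : List ℕ) : Prop where
  reach : ReflTransGen (GreedyStep (Move N)) [x] K
  head : K.head? = some (c :: e)
  spaced : Spaced N (c :: e)
  tail_mem : ∀ i j δ, Move c i j e δ → c :: δ ∈ K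
  contiguous : Contiguous K

section Settled

variable {N c v : ℕ} {x γ e e' : List ℕ} {H K : List (List ℕ)}

theorem spaced_of_reach (h : ReflTransGen (GreedyStep (Move N)) [x] K) (hx : Spaced N x) :
    ∀ y ∈ K, Spaced N y :=
  forall_mem_of_reach (S := {y | Spaced N y}) (fun _ _ _ _ _ hxy => hxy.spaced_right) h
    (by simpa using hx)

theorem cons_mem_map_append_iff (hfresh : ∀ y ∈ K, rightmost y ≠ v) {y : List ℕ} :
    v :: y ∈ H.map (v :: ·) ++ K ↔ y ∈ H := by
  rw [List.mem_append, List.mem_map_of_injective List.cons_injective, or_iff_left]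
  exact fun hmem => hfresh _ hmem rfl

/-- Moves inside the class of words with rightmost one at `c` precede the moves of that one, since
they move ones further to the left. -/
theorem GreedyStep.map_cons_append {H' : List (List ℕ)} (h : GreedyStep (Move c) H H')
    (hc : c + 2 ≤ N) (hfresh : ∀ y ∈ K, rightmost y ≠ c) :
    GreedyStep (Move N) (H.map (c :: ·) ++ K) (H'.map (c :: ·) ++ K) := by
  obtain @⟨y, z, T, i, j, hyz, hz, hmin⟩ := h
  refine .intro (.tail hc hyz) ?_ fun i' j' w hw hwmem => ?_
  · exact fun hmem => hz ((cons_mem_map_append_iff (H := y :: T) hfresh).1 hmem)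
  · cases hw with
    | head =>
      have := hyz.spaced_left.add_two_le hyz.mem_left
      exact .inl (by omega)
    | tail _ hyw =>
      exact hmin _ _ _ hyw fun hmem => hwmem ((cons_mem_map_append_iff hfresh).2 hmem)

theorem settled_map_cons_append (hreach : ReflTransGen (GreedyStep (Move N)) [x] ((v :: e) :: K))
    (hspaced : Spaced N (v :: e)) (hK : Contiguous K) (hfresh : ∀ y ∈ K, rightmost y ≠ v)
    (hvalley : Valley v K) (hH : Sweep v e H e') :
    Settled N x (H.map (v :: ·) ++ K) v e' := by
  obtain ⟨hv, he⟩ := spaced_cons.1 hspaced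
  refine ⟨hreach.trans ?_, ?_, spaced_cons.2 ⟨hv, spaced_of_reach hH.reach he e' hH.end_mem⟩, ?_,
    hH.contiguous.map_cons_append hK hfresh hvalley⟩
  · exact hH.reach.lift (fun H => H.map (v :: ·) ++ K) fun _ _ hstep =>
      hstep.map_cons_append hv hfresh
  · simp [hH.head]
  · exact fun i j δ hδ => (cons_mem_map_append_iff hfresh).2 (hH.stuck i j δ hδ)

theorem Sweep.settled (h : Sweep c γ K e) (hcγ : Spaced N (c :: γ)) :
    Settled N (c :: γ) (K.map (c :: ·)) c e := by
  simpa using settled_map_cons_append (K := []) .refl hcγ .nil (by simp) .nil h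

theorem Settled.mem (h : Settled N x K c e) : c :: e ∈ K :=
  List.mem_of_head? h.head

theorem Settled.next (h : Settled N x K c e) (hspaced : Spaced N (v :: e))
    (hfresh : ∀ y ∈ K, rightmost y ≠ v) (hbelow : ∀ u < v, Spaced N (u :: e) → u :: e ∈ K)
    (hvalley : Valley v K) (hH : Sweep v e H e') :
    Settled N x (H.map (v :: ·) ++ K) v e' := by
  refine settled_map_cons_append (h.reach.tail ?_) hspaced h.contiguous hfresh hvalley hH
  obtain ⟨T, rfl⟩ := List.head?_eq_some_iff.1 h.head
  refine .intro (.head h.spaced hspaced (hfresh _ h.mem).symm) (fun hmem => hfresh _ hmem rfl) ?_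
  intro i j w hw hwmem
  cases hw with
  | head _ hj => exact .inr ⟨rfl, not_lt.1 fun hjv => hwmem (hbelow _ hjv hj)⟩
  | tail _ hδ => exact absurd (h.tail_mem _ _ _ hδ) hwmem

theorem Settled.sweep (h : Settled N x K c e) (hall : ∀ v, Spaced N (v :: e) → v :: e ∈ K) :
    Sweep N x K (c :: e) := by
  refine ⟨⟨h.reach, h.head, fun i j y hy => ?_⟩, h.contiguous⟩
  cases hy with
  | head _ hv => exact hall _ hv
  | tail _ hδ => exact h.tail_mem _ _ _ hδ

end Settled

/-- The greedy algorithm on tuples of `t` elements ends at `packed N t` unless it starts there, and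
then it ends at `exitWord N t`. The words listed on the way keep the sweeps of longer tuples from
getting stuck. -/
structure Sweeps (t : ℕ) : Prop where
  of_ne : ∀ {N γ}, Spaced N γ → γ.length = t → γ ≠ packed N t → ∃ K, Sweep N γ K (packed N t)
  of_packed : ∀ {N}, 2 * t ≤ N → ∃ K, Sweep N (packed N t) K (exitWord N t) ∧
    packed (2 * t) t ∈ K ∧ (2 * t < N → packed (N - 1) t ∈ K)

theorem Sweeps.exists_sweep_packed {t N : ℕ} {γ : List ℕ} (hS : Sweeps t) (hγ : Spaced N γ)
    (ht : γ.length = t) (h : γ = packed N t → N = 2 * t ∨ t = 0) :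
    ∃ K, Sweep N γ K (packed N t) := by
  rcases eq_or_ne γ (packed N t) with rfl | hne
  · obtain ⟨K, hK, -⟩ := hS.of_packed (ht ▸ hγ.two_mul_length_le)
    have hexit : exitWord N t = packed N t := by
      rcases h rfl with rfl | rfl
      · exact exitWord_two_mul t
      · rfl
    exact ⟨K, hexit ▸ hK⟩
  · exact hS.of_ne hγ ht hne

theorem sweeps_zero : Sweeps 0 := by
  refine ⟨fun _ hlen hne => absurd (List.length_eq_zero_iff.1 hlen) hne, fun {N} _ => ?_⟩
  refine ⟨[[]], ⟨⟨.refl, ?_, fun i j y hy => ?_⟩, ?_⟩, List.mem_cons_self,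
    fun _ => List.mem_cons_self⟩
  · simp [exitWord, packed]
  · simpa [exitWord, packed] using hy.mem_left
  · exact List.triplewise_singleton _ _

/-- A settled state on the way right: with the remaining ones packed against the one at `c`, moving
that one can lead to new words only beyond `c`. -/
structure Ascending (N t : ℕ) (x : List ℕ) (K : List (List ℕ)) (c : ℕ) : Prop
    extends Settled N x K c (packed c t) where
  valley : Valley c K
  low : ∀ v ≤ c, Spaced N (v :: packed c t) → v :: packed c t ∈ K

/-- A settled state on the way left from `M`: one block of words for each position of the rightmost
one from `M` down to `c` has been listed. The words recorded to be in `K` are the endpoints of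
these blocks that later steps rely on. -/
structure Descending (N t M : ℕ) (x : List ℕ) (K : List (List ℕ)) (c : ℕ) : Prop
    extends Settled N x K c (exitWord c t) where
  valley : Valley c K
  rightmost_mem : ∀ y ∈ K, rightmost y ∈ Set.Icc c M
  low : ∀ v ∈ Set.Icc c M, v :: packed (2 * t) t ∈ K
  high : c < M → (M - 1) :: packed (M - 1) t ∈ K

section Step

variable {N t c d v M : ℕ} {x γ e : List ℕ} {K : List (List ℕ)}

theorem rightmost_of_mem_map_cons {y : List ℕ} (hy : y ∈ K.map (v :: ·)) : rightmost y = v := by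
  obtain ⟨y, -, rfl⟩ := List.mem_map.1 hy
  rfl

theorem Sweep.ascending (h : Sweep c γ K (packed c t)) (hcγ : Spaced N (c :: γ))
    (hc : t = 0 → c = 0) : Ascending N t (c :: γ) (K.map (c :: ·)) c where
  toSettled := h.settled hcγ
  valley := valley_of_rightmost_le fun _ hy => (rightmost_of_mem_map_cons hy).le
  low v hv hspaced := by
    obtain rfl : v = c := by
      by_cases ht : t = 0
      · have := hc ht
        omega
      · exact hv.antisymm (le_of_spaced_packed (spaced_cons.1 hspaced).2 ht)
    exact (h.settled hcγ).mem

theorem Settled.ascending_next (hS : Sweeps t) (h : Settled N x K c e) (ht : e.length = t)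
    (hspaced : Spaced N (v :: e)) (hfresh : ∀ y ∈ K, rightmost y ≠ v)
    (hbelow : ∀ u < v, Spaced N (u :: e) → u :: e ∈ K) (hvalley : Valley v K)
    (he : e = packed v t → v = 2 * t ∨ t = 0) :
    ∃ K', Ascending N t x K' v ∧ v :: e ∈ K' ∧ K ⊆ K' ∧ ∀ y ∈ K', y ∈ K ∨ rightmost y = v := by
  obtain ⟨H, hH⟩ := hS.exists_sweep_packed (spaced_cons.1 hspaced).2 ht he
  have hsettled := h.next hspaced hfresh hbelow hvalley hH
  refine ⟨_, ⟨hsettled, hvalley.map_cons_append H, fun u hu hspaced' => ?_⟩, ?_,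
    List.subset_append_right _ _, fun y hy => ?_⟩
  · rcases hu.eq_or_lt with rfl | hu
    · exact hsettled.mem
    · obtain rfl : t = 0 := by
        by_contra ht0
        exact hu.not_ge (le_of_spaced_packed (spaced_cons.1 hspaced').2 ht0)
      obtain rfl := List.length_eq_zero_iff.1 ht
      exact List.mem_append_right _ (hbelow u hu hspaced')
  · exact List.mem_append_left _ (List.mem_map_of_mem hH.start_mem)
  · exact (List.mem_append.1 hy).symm.imp_right rightmost_of_mem_map_cons

theorem Ascending.two_mul_le (h : Ascending N t x K c) : 2 * t ≤ c := by
  simpa only [length_packed] using (spaced_cons.1 h.spaced).2.two_mul_length_le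

theorem Ascending.climb (hS : Sweeps t) (h : Ascending N t x K c) (hcd : c ≤ d) (hd : d + 2 ≤ N)
    (hfresh : ∀ y ∈ K, rightmost y ∉ Set.Ioc c d) :
    ∃ K', Ascending N t x K' d ∧ K ⊆ K' ∧ ∀ y ∈ K', y ∈ K ∨ rightmost y ≤ d := by
  induction d, hcd using Nat.le_induction with
  | base => exact ⟨K, h, List.Subset.refl K, fun _ => .inl⟩
  | succ d hcd ih =>
    obtain ⟨K', hK', hsub, hmem⟩ := ih (by omega) fun y hy hyd =>
      hfresh y hy (Set.Ioc_subset_Ioc_right d.le_succ hyd)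
    have htd := hK'.two_mul_le
    have hfresh' (y : List ℕ) (hy : y ∈ K') : rightmost y ≠ d + 1 := by
      rcases hmem y hy with hy | hy
      · exact fun hyd => hfresh y hy ⟨by omega, by omega⟩
      · omega
    have hne : packed d t = packed (d + 1) t → t = 0 :=
      not_imp_not.1 fun ht => packed_ne_packed htd d.lt_succ_self ht
    obtain ⟨K'', hK'', -, hsub', hmem'⟩ := hK'.ascending_next hS (length_packed d t)
      (spaced_cons.2 ⟨hd, (spaced_packed htd).mono d.le_succ⟩) hfresh'
      (fun u hu => hK'.low u (by omega)) (hK'.valley.mono d.le_succ) (fun h => .inr (hne h))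
    refine ⟨K'', hK'', List.Subset.trans hsub hsub', fun y hy => ?_⟩
    rcases hmem' y hy with hy | hy
    · exact (hmem y hy).imp_right (by omega)
    · exact .inr hy.le

theorem Ascending.sweep (h : Ascending N t x K c) (hc : c + 2 = N) :
    Sweep N x K (packed N (t + 1)) := by
  subst hc
  refine h.toSettled.sweep fun v hv => h.low v ?_ hv
  have := (spaced_cons.1 hv).1
  omega

theorem Ascending.exists_sweep (hS : Sweeps t) (h : Ascending N t x K c)
    (hfresh : ∀ y ∈ K, rightmost y ≤ c) :
    ∃ K', Sweep N x K' (packed N (t + 1)) := by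
  have hc := (spaced_cons.1 h.spaced).1
  obtain ⟨K', hK', -⟩ := h.climb hS (d := N - 2) (by omega) (by omega)
    fun y hy hyc => hyc.1.not_ge (hfresh y hy)
  exact ⟨K', hK'.sweep (by omega)⟩

end Step

/-- A settled state of the run from `c :: packed c t` in which only a rightmost one beyond `c` can
lead to new words. The current word is where the run ends if there is no room beyond `c`. -/
structure Exhausted (N t c : ℕ) (K : List (List ℕ)) (b : ℕ) : Prop
    extends Settled N (c :: packed c t) K b (packed b t) where
  lt : b < c
  exit : packed (b + 2) (t + 1) = exitWord (c + 2) (t + 1)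
  rightmost_le : ∀ y ∈ K, rightmost y ≤ c
  low : ∀ v ≤ c, Spaced N (v :: packed b t) → v :: packed b t ∈ K
  mem_low : packed (2 * (t + 1)) (t + 1) ∈ K
  mem_high : packed (c + 1) (t + 1) ∈ K

section Sweeps

variable {N t c b M : ℕ} {x γ : List ℕ} {K : List (List ℕ)}

theorem exists_ascending_of_even (hS : Sweeps t) (ht : Even t) (hc : 2 * t < c) (hN : c + 2 ≤ N) :
    ∃ K, Ascending N t (c :: packed c t) K (2 * t) ∧ c :: packed (c - 1) t ∈ K ∧
      2 * t :: packed (2 * t) t ∈ K ∧ ∀ y ∈ K, rightmost y = c ∨ rightmost y = 2 * t := by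
  obtain ⟨H, hH, -, hhigh⟩ := hS.of_packed hc.le
  rw [exitWord_of_even ht] at hH
  have hblock {y : List ℕ} (hy : y ∈ H.map (c :: ·)) : rightmost y = c :=
    rightmost_of_mem_map_cons hy
  have hvalley : Valley (2 * t) (H.map (c :: ·)) :=
    (valley_of_rightmost_le fun y hy => (hblock hy).le).of_le_rightmost fun y hy => (hblock hy).ge
  have hbelow (u : ℕ) (hu : u < 2 * t) (hspaced : Spaced N (u :: packed (2 * t) t)) :
      u :: packed (2 * t) t ∈ H.map (c :: ·) := by
    have := (spaced_cons.1 hspaced).2.two_mul_length_le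
    rw [length_packed] at this
    omega
  obtain ⟨K, hK, hmem, hsub, hrightmost⟩ :=
    (hH.settled (spaced_cons.2 ⟨hN, spaced_packed hc.le⟩)).ascending_next hS (length_packed _ _)
      (spaced_cons.2 ⟨by omega, spaced_packed le_rfl⟩) (fun y hy => (hblock hy).trans_ne hc.ne')
      hbelow hvalley (fun _ => .inl rfl)
  exact ⟨K, hK, hsub (List.mem_map_of_mem (hhigh hc)), hmem, fun y hy =>
    (hrightmost y hy).imp_left hblock⟩

theorem exists_exhausted_of_even (hS : Sweeps t) (ht : Even t) (hb : 2 * t ≤ b) (hN : b + 3 ≤ N) :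
    ∃ K, Exhausted N t (b + 1) K b := by
  obtain ⟨K, hK, hhigh, hlow, hrightmost⟩ :=
    exists_ascending_of_even hS ht (Nat.lt_succ_of_le hb) hN
  obtain ⟨K', hK', hsub, hrightmost'⟩ := hK.climb hS hb (by omega) fun y hy hyb => by
    have := hrightmost y hy
    have := hyb.1
    have := hyb.2
    omega
  refine ⟨K', hK'.toSettled, b.lt_succ_self, ?_, fun y hy => ?_, fun v hv hspaced => ?_,
    hsub hlow, hK'.mem⟩
  · exact (exitWord_of_odd (N := b + 3) (fun h => Nat.even_add_one.1 h ht) (by omega)).symm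
  · rcases hrightmost' y hy with hy | hy
    · have := hrightmost y hy
      omega
    · omega
  · rcases hv.eq_or_lt with rfl | hv
    · exact hsub hhigh
    · exact hK'.low v (by omega) hspaced

theorem Descending.exists_next (hS : Sweeps t) (ht : ¬ Even t)
    (h : Descending N t M (M :: packed M t) K (c + 1)) (hc : 2 * t ≤ c) (hcM : c < M) :
    ∃ K', Descending N t M (M :: packed M t) K' c := by
  obtain ⟨H, hH, hlow, -⟩ := hS.of_packed hc
  have hsettled := h.toSettled
  rw [exitWord_of_odd ht (by omega), Nat.add_sub_cancel] at hsettled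
  have hN := (spaced_cons.1 h.spaced).1
  have hbelow (u : ℕ) (hu : u < c) (hspaced : Spaced N (u :: packed c t)) :
      u :: packed c t ∈ K := by
    refine absurd (le_of_spaced_packed (spaced_cons.1 hspaced).2 ?_) hu.not_ge
    rintro rfl
    exact ht .zero
  have hvalley : Valley c K := h.valley.of_le_rightmost fun y hy => (h.rightmost_mem y hy).1
  have hnext := hsettled.next (spaced_cons.2 ⟨by omega, spaced_packed hc⟩)
    (fun y hy => (Nat.lt_of_succ_le (h.rightmost_mem y hy).1).ne') hbelow hvalley hH
  refine ⟨_, hnext, hvalley.map_cons_append H, fun y hy => ?_, fun v hv => ?_, fun _ => ?_⟩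
  · rcases List.mem_append.1 hy with hy | hy
    · rw [rightmost_of_mem_map_cons hy]
      exact ⟨le_rfl, hcM.le⟩
    · exact Set.Icc_subset_Icc_left c.le_succ (h.rightmost_mem y hy)
  · rcases hv.1.eq_or_lt with rfl | hcv
    · exact List.mem_append_left _ (List.mem_map_of_mem hlow)
    · exact List.mem_append_right _ (h.low v ⟨hcv, hv.2⟩)
  · rcases (Nat.succ_le_of_lt hcM).eq_or_lt with rfl | hlt
    · exact List.mem_append_left _ (List.mem_map_of_mem hH.start_mem)
    · exact List.mem_append_right _ (h.high hlt)

theorem exists_descending (hS : Sweeps t) (ht : ¬ Even t) (hM : M + 2 ≤ N) (hc : 2 * t ≤ c)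
    (hcM : c ≤ M) : ∃ K, Descending N t M (M :: packed M t) K c := by
  induction hcM using Nat.decreasingInduction with
  | self =>
    obtain ⟨H, hH, hlow, -⟩ := hS.of_packed hc
    have hblock {y : List ℕ} (hy : y ∈ H.map (M :: ·)) : rightmost y = M :=
      rightmost_of_mem_map_cons hy
    refine ⟨_, hH.settled (spaced_cons.2 ⟨hM, spaced_packed hc⟩), ?_, ?_, ?_, ?_⟩
    · exact valley_of_rightmost_le fun y hy => (hblock hy).le
    · exact fun y hy => ⟨(hblock hy).ge, (hblock hy).le⟩
    · rintro v ⟨hv, hv'⟩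
      obtain rfl := hv.antisymm hv'
      exact List.mem_map_of_mem hlow
    · exact fun hlt => absurd hlt (lt_irrefl M)
  | of_succ c hcM ih =>
    obtain ⟨K, hK⟩ := ih (by omega)
    exact hK.exists_next hS ht hc hcM

theorem exists_exhausted_of_odd (hS : Sweeps t) (ht : ¬ Even t) (hc : 2 * t < c) (hN : c + 2 ≤ N) :
    ∃ K, Exhausted N t c K (2 * t) := by
  obtain ⟨K, hK⟩ := exists_descending hS ht hN le_rfl hc.le
  have hsettled := hK.toSettled
  rw [exitWord_two_mul] at hsettled
  refine ⟨K, hsettled, hc, (exitWord_of_even (Nat.even_add_one.2 ht)).symm,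
    fun y hy => (hK.rightmost_mem y hy).2, fun v hv hspaced => hK.low v ⟨?_, hv⟩,
    hK.low (2 * t) ⟨le_rfl, hc.le⟩, ?_⟩
  · simpa only [length_packed] using (spaced_cons.1 hspaced).2.two_mul_length_le
  · obtain ⟨c, rfl⟩ := Nat.exists_eq_add_of_le' (Nat.one_le_of_lt hc)
    exact hK.high hc

theorem exists_exhausted (hS : Sweeps t) (hc : 2 * t < c) (hN : c + 2 ≤ N) :
    ∃ K b, Exhausted N t c K b := by
  by_cases ht : Even t
  · obtain ⟨b, rfl⟩ := Nat.exists_eq_add_of_le' (Nat.one_le_of_lt hc)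
    exact (exists_exhausted_of_even hS ht (Nat.le_of_lt_succ hc) hN).imp fun _ hK => ⟨_, hK⟩
  · exact (exists_exhausted_of_odd hS ht hc hN).imp fun _ hK => ⟨_, hK⟩

theorem Exhausted.sweep (h : Exhausted N t c K b) (hc : c + 2 = N) :
    Sweep N (packed N (t + 1)) K (exitWord N (t + 1)) := by
  subst hc
  rw [← h.exit]
  refine h.toSettled.sweep fun v hv => h.low v ?_ hv
  have := (spaced_cons.1 hv).1
  omega

theorem Exhausted.exists_sweep (hS : Sweeps t) (h : Exhausted N t c K b) (hc : c + 2 < N) :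
    ∃ K', Sweep N (c :: packed c t) K' (packed N (t + 1)) := by
  have htb : 2 * t ≤ b := by
    simpa only [length_packed] using (spaced_cons.1 h.spaced).2.two_mul_length_le
  have hbc := h.lt
  have hne : packed b t = packed (c + 1) t → t = 0 :=
    not_imp_not.1 fun ht => packed_ne_packed htb (by omega) ht
  obtain ⟨K', hK', -, -, hmem⟩ := h.toSettled.ascending_next hS (length_packed b t)
    (spaced_cons.2 ⟨by omega, (spaced_packed htb).mono (by omega)⟩)
    (fun y hy => (Nat.lt_succ_of_le (h.rightmost_le y hy)).ne) (fun u hu => h.low u (by omega))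
    (valley_of_rightmost_le fun y hy => (h.rightmost_le y hy).trans c.le_succ)
    (fun heq => .inr (hne heq))
  exact hK'.exists_sweep hS fun y hy =>
    (hmem y hy).elim (fun hy => (h.rightmost_le y hy).trans c.le_succ) Eq.le

theorem Sweeps.exists_sweep_cons (hS : Sweeps t) (hcγ : Spaced N (c :: γ)) (ht : γ.length = t)
    (h : γ = packed c t → c = 2 * t) : ∃ K, Sweep N (c :: γ) K (packed N (t + 1)) := by
  obtain ⟨H, hH⟩ := hS.exists_sweep_packed (spaced_cons.1 hcγ).2 ht fun heq => .inl (h heq)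
  have hzero : t = 0 → c = 0 := by
    rintro rfl
    exact h (List.length_eq_zero_iff.1 ht)
  exact (hH.ascending hcγ hzero).exists_sweep hS fun y hy =>
    (rightmost_of_mem_map_cons hy).le

theorem sweeps_succ (hS : Sweeps t) : Sweeps (t + 1) where
  of_ne {N γ} hγ ht hne := by
    obtain ⟨c, γ, rfl⟩ := List.exists_cons_of_length_eq_add_one ht
    rw [List.length_cons, Nat.add_right_cancel_iff] at ht
    by_cases hcase : γ = packed c t → c = 2 * t
    · exact hS.exists_sweep_cons hγ ht hcase
    · obtain ⟨rfl, _⟩ := Classical.not_imp.1 hcase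
      obtain ⟨hcN, hspaced⟩ := spaced_cons.1 hγ
      have := hspaced.two_mul_length_le
      rw [length_packed] at this
      have hcN' : c + 2 ≠ N := by
        rintro rfl
        exact hne rfl
      obtain ⟨K, b, hK⟩ := exists_exhausted hS (by omega) hcN
      exact hK.exists_sweep hS (by omega)
  of_packed {N} hN := by
    obtain ⟨c, rfl⟩ := Nat.exists_eq_add_of_le' (show 2 ≤ N by omega)
    rcases (show 2 * t ≤ c by omega).eq_or_lt with rfl | hc
    · obtain ⟨K, hK⟩ := hS.exists_sweep_cons (spaced_packed hN) (length_packed _ _) fun _ => rfl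
      exact ⟨K, (exitWord_two_mul (t + 1)).symm ▸ hK, hK.start_mem, fun h => absurd h (by omega)⟩
    · obtain ⟨K, b, hK⟩ := exists_exhausted hS hc le_rfl
      exact ⟨K, hK.sweep rfl, hK.mem_low, fun _ => hK.mem_high⟩

theorem sweeps (t : ℕ) : Sweeps t := by
  induction t with
  | zero => exact sweeps_zero
  | succ t ih => exact sweeps_succ ih

end Sweeps

section Transfer

variable {n : ℕ} {x : List ℕ} {K : List (List ℕ)} {L : List (List Bool)}

theorem suffix_toWord_of_above_eq {a b d : List ℕ} {s : List Bool} (ha : Spaced (n + 1) a)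
    (hb : Spaced (n + 1) b) (hd : Spaced (n + 1) d)
    (habd : ∀ q, above q a = above q d → above q b = above q a) (hsa : s <:+ toWord n a)
    (hsd : s <:+ toWord n d) : s <:+ toWord n b := by
  simp only [List.suffix_iff_eq_drop, length_toWord] at hsa hsd ⊢
  have had := (drop_toWord_eq_iff ha hd _).1 (hsa.symm.trans hsd)
  exact hsa.trans ((drop_toWord_eq_iff hb ha _).2 (habd _ had)).symm

theorem suffixPartitioned_of_triplewise
    (h : L.Triplewise fun a b d => ∀ s, s <:+ a → s <:+ d → s <:+ b) : suffixPartitioned L := by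
  intro s i j k hij hjk hk hsi hsk
  rcases hij.eq_or_lt with rfl | hij
  · exact hsi
  rcases hjk.eq_or_lt with rfl | hjk
  · exact hsk
  rw [List.getD_eq_getElem _ _ (by omega)] at hsi hsk ⊢
  exact List.triplewise_iff_getElem.1 h i j k hij hjk hk s hsi hsk

theorem Contiguous.suffixPartitioned (hK : Contiguous K) (hspaced : ∀ y ∈ K, Spaced (n + 1) y)
    (hL : L.reverse = K.map (toWord n)) : suffixPartitioned L := by
  refine suffixPartitioned_of_triplewise ?_
  rw [← L.reverse_reverse, hL, List.triplewise_reverse, List.triplewise_map,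
    List.triplewise_iff_getElem]
  intro i j k hij hjk hk s hsd hsa
  exact suffix_toWord_of_above_eq (hspaced _ (List.getElem_mem _)) (hspaced _ (List.getElem_mem _))
    (hspaced _ (List.getElem_mem _)) (List.triplewise_iff_getElem.1 hK i j k hij hjk hk) hsa hsd

theorem exists_sweep (hx : Spaced n x) : ∃ K e, Sweep n x K e := by
  by_cases heq : x = packed n x.length
  · obtain ⟨K, hK, -⟩ := (sweeps x.length).of_packed hx.two_mul_length_le
    rw [← heq] at hK
    exact ⟨K, _, hK⟩
  · exact ((sweeps x.length).of_ne hx rfl heq).imp fun _ hK => ⟨_, hK⟩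

theorem IsGreedyRun.map_toWord {e : List ℕ} (h : IsGreedyRun (Move (n + 1)) x K e)
    (hx : Spaced (n + 1) x) :
    IsGreedyRun (WordMove (memF n x.length)) (toWord n x) (K.map (toWord n)) (toWord n e) := by
  refine h.map (S := {y | Spaced (n + 1) y ∧ y.length = x.length})
    (toWord_injOn.mono fun _ hy => hy.1) ?_ ?_ ⟨hx, rfl⟩
  · exact fun y hy i j z hyz => ⟨hyz.spaced_right, hyz.length_eq.trans hy.2⟩
  · exact fun y hy i j w => hy.2 ▸ wordMove_toWord_iff hy.1

end Transfer

end GreedyGray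

open GreedyGray

theorem greedy_suffixPartitioned (n k : ℕ) (hn : 2 * k ≤ n + 1) (α : List Bool)
    (hα : memF n k α) :
    ∀ L : List (List Bool), IsGreedyList (memF n k) α L → suffixPartitioned L := by
  intro L hL
  obtain ⟨x, hx, rfl, rfl⟩ := exists_eq_toWord hα
  obtain ⟨K, e, hK⟩ := exists_sweep hx
  obtain ⟨ω, hω⟩ := isGreedyRun_of_isGreedyList hL
  have hLK : L.reverse = K.map (toWord n) :=
    hω.unique (WordMove.rightUnique _) (hK.map_toWord hx)
  exact hK.contiguous.suffixPartitioned (spaced_of_reach hK.reach hx) hLK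
end
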